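/- Let d = 4, m = 0, let M ∈ ℕ with M ≤ d/2 − 1 (i.e. M = 1), let L ≥ 1, and let q be a real number with 0 < q ≤ C·L for some C > 0. Then for any 0 < β ≤ 1, any N ≥ 0 and any w ∈ C^{M,d+1}(ℝ^d): I_q(0; A, 0, L) = L^d·σ_∞(w; A, 0) + O( β^{−M−1} q^M L^{d−M} ⟨log(q/(Lβ))⟩ ‖w‖_{M,d+1} ) + O_{C,N}( (q^N L^{d−N} + β^N)( ‖w‖_{M−1,d+1} + L q^{−1} ‖w‖_{0,d+1} ) ), where I_q(0; A, 0, L) := L^d ∫_{ℝ^d} w(z) h(q/L, F(z)) dz. -/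

import Mathlib

open MeasureTheory Filter Topology Set
open scoped BigOperators Classical

noncomputable section

/-- `e_q(x) := exp(2πix/q)`. -/
def eFun (q : ℕ) (x : ℝ) : ℂ := Complex.exp (2 * Real.pi * Complex.I * x / q)

/-- `F(z) = (1/2)⟨Az, z⟩` for an integer matrix `A`. -/
def Fq {d : ℕ} (A : Matrix (Fin d) (Fin d) ℤ) (z : Fin d → ℝ) : ℝ :=
  (1 / 2) * ∑ i, ∑ j, (A i j : ℝ) * z i * z j

/-- The exponential sum `S_q(c; A, t)`. -/
def Sq {d : ℕ} (q : ℕ) (c : Fin d → ℤ) (A : Matrix (Fin d) (Fin d) ℤ) (t : ℤ) : ℂ :=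
  ∑ a ∈ (Finset.range q).filter (fun a => Nat.Coprime a q),
    ∑ b : Fin d → Fin q,
      eFun q ((a : ℝ) * (Fq A (fun i => (b i : ℝ)) - (t : ℝ)) + ∑ i, (c i : ℝ) * (b i : ℝ))

/-- `σ_p(A,t) = Σ_l p^{-dl} S_{p^l}(0; A, t)`. -/
def sigmaP {d : ℕ} (p : ℕ) (A : Matrix (Fin d) (Fin d) ℤ) (t : ℤ) : ℂ :=
  ∑' l : ℕ, ((p : ℂ) ^ (d * l))⁻¹ * Sq (p ^ l) 0 A t

/-- `σ(A,t) = Π_p σ_p(A,t)`. -/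
def sigmaA {d : ℕ} (A : Matrix (Fin d) (Fin d) ℤ) (t : ℤ) : ℂ :=
  ∏' p : Nat.Primes, sigmaP (p : ℕ) A t

/-- `σ*(A) = Π_p (1 - p⁻¹) σ_p(A,0)`. -/
def sigmaStar {d : ℕ} (A : Matrix (Fin d) (Fin d) ℤ) : ℂ :=
  ∏' p : Nat.Primes, (1 - ((p : ℕ) : ℂ)⁻¹) * sigmaP (p : ℕ) A 0

/-- The weight `w₀`. -/
def wZero (x : ℝ) : ℝ := if |x| < 1 then Real.exp (1 / (x ^ 2 - 1)) else 0

def cZero : ℝ := ∫ x : ℝ, wZero x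

def omegaFun (x : ℝ) : ℝ := (4 / cZero) * wZero (4 * x - 3)

/-- The function `h(x,y) = Σ_{j≥1} (1/(xj)) [ω(xj) − ω(|y|/(xj))]`. -/
def hFun (x y : ℝ) : ℝ :=
  ∑' j : ℕ, (1 / (x * ((j : ℝ) + 1))) *
    (omegaFun (x * ((j : ℝ) + 1)) - omegaFun (|y| / (x * ((j : ℝ) + 1))))

/-- Japanese bracket `⟨z⟩ = max(1, ‖z‖)`. -/
def jap {d : ℕ} (z : Fin d → ℝ) : ℝ := max 1 ‖z‖

def normSet {d : ℕ} (n1 : ℕ) (n2 : ℝ) (f : (Fin d → ℝ) → ℝ) : Set ℝ :=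
  {r | ∃ (k : ℕ) (z : Fin d → ℝ), k ≤ n1 ∧ r = ‖iteratedFDeriv ℝ k f z‖ * jap z ^ n2}

/-- The norm `‖f‖_{n1,n2}`. -/
def wNorm {d : ℕ} (n1 : ℕ) (n2 : ℝ) (f : (Fin d → ℝ) → ℝ) : ℝ := sSup (normSet n1 n2 f)

/-- Membership in the class `C^{n1,n2}`. -/
def MemC {d : ℕ} (n1 : ℕ) (n2 : ℝ) (f : (Fin d → ℝ) → ℝ) : Prop :=
  ContDiff ℝ n1 f ∧ BddAbove (normSet n1 n2 f)

def jap1 (y : ℝ) : ℝ := max 1 |y|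

def normSet1 (n1 : ℕ) (n2 : ℝ) (f : ℝ → ℝ) : Set ℝ :=
  {r | ∃ (k : ℕ) (y : ℝ), k ≤ n1 ∧ r = |iteratedDeriv k f y| * jap1 y ^ n2}

def wNorm1 (n1 : ℕ) (n2 : ℝ) (f : ℝ → ℝ) : ℝ := sSup (normSet1 n1 n2 f)

def MemC1 (n1 : ℕ) (n2 : ℝ) (f : ℝ → ℝ) : Prop :=
  ContDiff ℝ n1 f ∧ BddAbove (normSet1 n1 n2 f)

/-- `N_L(w; A, m) = Σ_{z ∈ L⁻¹ℤ^d, F(z)=m} w(z)`. -/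
def NL {d : ℕ} (A : Matrix (Fin d) (Fin d) ℤ) (L m : ℝ) (w : (Fin d → ℝ) → ℝ) : ℝ :=
  ∑' v : Fin d → ℤ,
    if Fq A (fun i => (v i : ℝ) / L) = m then w (fun i => (v i : ℝ) / L) else 0

/-- `σ_∞(w; A, m)` as a limit. -/
def IsSigmaInf {d : ℕ} (A : Matrix (Fin d) (Fin d) ℤ) (m : ℝ) (w : (Fin d → ℝ) → ℝ)
    (s : ℝ) : Prop :=
  Tendsto (fun ε : ℝ => (1 / (2 * ε)) * ∫ z in {z : Fin d → ℝ | |Fq A z - m| ≤ ε}, w z)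
    (nhdsWithin 0 (Set.Ioi 0)) (nhds s)

def intCast' {d : ℕ} (c : Fin d → ℤ) : Fin d → ℝ := fun i => (c i : ℝ)

/-- the matrix of `F_d(x,y) = Σ x_i y_i` on `ℤ^{2s}`. -/
def Ad (s : ℕ) : Matrix (Fin (2 * s)) (Fin (2 * s)) ℤ :=
  fun i j => if i.val + s = j.val ∨ j.val + s = i.val then 1 else 0

/-- `F(z) = (1/2)⟨Az, z⟩` for a real matrix `A`. -/
def FqR {d : ℕ} (A : Matrix (Fin d) (Fin d) ℝ) (z : Fin d → ℝ) : ℝ :=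
  (1 / 2) * ∑ i, ∑ j, A i j * z i * z j


lemma wZero_eq (x : ℝ) : wZero x = expNegInvGlue (1 - x ^ 2) := by
  unfold wZero expNegInvGlue
  by_cases h : |x| < 1
  · have h1 : x ^ 2 < 1 := by rwa [sq_lt_one_iff_abs_lt_one]
    rw [if_pos h, if_neg (by linarith)]
    congr 1
    rw [one_div, ← neg_sub, neg_inv, neg_sub]
  · have h1 : ¬ x ^ 2 < 1 := by rwa [sq_lt_one_iff_abs_lt_one]
    rw [if_neg h, if_pos (by linarith)]

lemma wZero_contDiff : ContDiff ℝ 3 wZero := by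
  have : wZero = fun x => expNegInvGlue (1 - x ^ 2) := funext wZero_eq
  rw [this]
  exact (expNegInvGlue.contDiff (n := 3)).comp (by fun_prop)

lemma wZero_nonneg (x : ℝ) : 0 ≤ wZero x := by
  rw [wZero_eq]; exact expNegInvGlue.nonneg _

lemma wZero_zero {x : ℝ} (h : 1 ≤ |x|) : wZero x = 0 := by
  unfold wZero; rw [if_neg (by linarith)]

lemma wZero_supp : HasCompactSupport wZero := by
  refine HasCompactSupport.intro (isCompact_Icc (a := (-1:ℝ)) (b := 1)) ?_
  intro x hx
  apply wZero_zero
  by_contra h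
  push Not at h
  rw [abs_lt] at h
  exact hx ⟨h.1.le, h.2.le⟩

lemma cZero_pos : 0 < cZero := by
  unfold cZero
  rw [integral_pos_iff_support_of_nonneg wZero_nonneg
    (wZero_contDiff.continuous.integrable_of_hasCompactSupport wZero_supp)]
  refine (IsOpen.measure_pos volume wZero_contDiff.continuous.isOpen_support ⟨0, ?_⟩)
  simp [wZero]

lemma omega_contDiff : ContDiff ℝ 3 omegaFun := by
  have : omegaFun = fun x => (4 / cZero) * wZero (4 * x - 3) := rfl
  rw [this]
  exact contDiff_const.mul (wZero_contDiff.comp (by fun_prop))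

lemma omega_cont : Continuous omegaFun := omega_contDiff.continuous

lemma omega_nonneg (x : ℝ) : 0 ≤ omegaFun x :=
  mul_nonneg (div_nonneg (by norm_num) cZero_pos.le) (wZero_nonneg _)

lemma omega_zero_le {x : ℝ} (h : x ≤ 1 / 2) : omegaFun x = 0 := by
  unfold omegaFun; rw [wZero_zero, mul_zero]
  rw [le_abs]; right; linarith

lemma omega_zero_ge {x : ℝ} (h : 1 ≤ x) : omegaFun x = 0 := by
  unfold omegaFun; rw [wZero_zero, mul_zero]
  rw [le_abs]; left; linarith

lemma omega_bdd : ∃ B : ℝ, 0 ≤ B ∧ ∀ x, omegaFun x ≤ B := by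
  obtain ⟨B, hB⟩ := wZero_contDiff.continuous.bounded_above_of_compact_support wZero_supp
  have hB0 : 0 ≤ B := (norm_nonneg _).trans (hB 0)
  refine ⟨4 / cZero * B, by have := cZero_pos; positivity, fun x => ?_⟩
  unfold omegaFun
  refine mul_le_mul_of_nonneg_left ((le_abs_self _).trans (hB _)) ?_
  have := cZero_pos; positivity

lemma omega_int : ∫ x : ℝ, omegaFun x = 1 := by
  unfold omegaFun
  rw [integral_const_mul]
  have h1 : ∫ x : ℝ, wZero (4 * x - 3) = |(4:ℝ)⁻¹| • ∫ x : ℝ, wZero (x - 3) :=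
    Measure.integral_comp_mul_left (fun x => wZero (x - 3)) 4
  rw [h1, integral_sub_right_eq_self (fun x => wZero x)]
  have := cZero_pos
  change 4 / cZero * (|(4:ℝ)⁻¹| • cZero) = 1
  rw [abs_of_pos (by norm_num), smul_eq_mul]
  field_simp

def theta (u : ℝ) : ℝ := ∫ t in (0:ℝ)..u, omegaFun t

lemma theta_le {u : ℝ} (h : u ≤ 1 / 2) : theta u = 0 := by
  unfold theta
  rw [intervalIntegral.integral_congr (g := fun _ => 0)]
  · simp
  · intro t ht
    apply omega_zero_le
    rw [mem_uIcc] at ht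
    rcases ht with ht | ht <;> linarith [ht.1, ht.2]

lemma theta_ge {u : ℝ} (h : 1 ≤ u) : theta u = 1 := by
  unfold theta
  rw [intervalIntegral.integral_of_le (by linarith), ← omega_int]
  apply setIntegral_eq_integral_of_forall_compl_eq_zero
  intro x hx
  by_cases h0 : x ≤ 1 / 2
  · exact omega_zero_le h0
  · apply omega_zero_ge
    by_contra h1
    exact hx ⟨by linarith, by linarith⟩

lemma theta_deriv (u : ℝ) : HasDerivAt theta (omegaFun u) u :=
  intervalIntegral.integral_hasDerivAt_right (omega_cont.intervalIntegrable _ _)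
    omega_cont.stronglyMeasurable.stronglyMeasurableAtFilter omega_cont.continuousAt

/-- `ω(t)/t` -/
def rho1 (t : ℝ) : ℝ := omegaFun t / t

lemma rho1_contDiff : ContDiff ℝ 3 rho1 := by
  rw [contDiff_iff_contDiffAt]
  intro t
  by_cases h : t < 1 / 2
  · have : rho1 =ᶠ[𝓝 t] fun _ => 0 := by
      filter_upwards [gt_mem_nhds h] with s hs
      simp [rho1, omega_zero_le hs.le]
    exact contDiffAt_const.congr_of_eventuallyEq this
  · exact ((omega_contDiff.of_le (by norm_num)).contDiffAt).div contDiffAt_id (by simp; linarith)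

lemma rho1_zero_ge {x : ℝ} (h : 1 ≤ x) : rho1 x = 0 := by simp [rho1, omega_zero_ge h]
lemma rho1_zero_le {x : ℝ} (h : x ≤ 1 / 2) : rho1 x = 0 := by simp [rho1, omega_zero_le h]
lemma rho1_nonneg {x : ℝ} : 0 ≤ rho1 x := by
  by_cases h : x ≤ 1 / 2
  · rw [rho1_zero_le h]
  · exact div_nonneg (omega_nonneg _) (by linarith)

def pfun (u : ℝ) : ℝ := ∫ t in (0:ℝ)..u, rho1 t
def kappa : ℝ := pfun 2

lemma kappa_nonneg : 0 ≤ kappa :=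
  intervalIntegral.integral_nonneg (by norm_num) (fun _ _ => rho1_nonneg)

lemma pfun_le {u : ℝ} (h : u ≤ 1 / 2) : pfun u = 0 := by
  unfold pfun
  rw [intervalIntegral.integral_congr (g := fun _ => 0)]
  · simp
  · intro t ht
    apply rho1_zero_le
    rw [mem_uIcc] at ht
    rcases ht with ht | ht <;> linarith [ht.1, ht.2]

lemma pfun_deriv (u : ℝ) : HasDerivAt pfun (rho1 u) u :=
  intervalIntegral.integral_hasDerivAt_right (rho1_contDiff.continuous.intervalIntegrable _ _)
    rho1_contDiff.continuous.stronglyMeasurable.stronglyMeasurableAtFilter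
    rho1_contDiff.continuous.continuousAt

def aa (v : ℝ) : ℝ := omegaFun (v⁻¹) / v ^ 2

lemma aa_zero {v : ℝ} (h : v ≤ 1) : aa v = 0 := by
  unfold aa
  by_cases h0 : v ≤ 0
  · rw [omega_zero_le (by have := inv_nonpos.2 h0; linarith), zero_div]
  · rw [omega_zero_ge ((one_le_inv₀ (by linarith)).2 h), zero_div]

lemma aa_contDiff : ContDiff ℝ 2 aa := by
  rw [contDiff_iff_contDiffAt]
  intro t
  by_cases h : t < 1
  · have : aa =ᶠ[𝓝 t] fun _ => 0 := by
      filter_upwards [gt_mem_nhds h] with s hs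
      exact aa_zero hs.le
    exact contDiffAt_const.congr_of_eventuallyEq this
  · have h0 : t ≠ 0 := by linarith
    refine ContDiffAt.div ?_ (contDiffAt_id.pow 2) (by simpa using h0)
    have h1 : ContDiff ℝ 2 omegaFun := omega_contDiff.of_le (by norm_num)
    exact ContDiffAt.comp (g := omegaFun) t h1.contDiffAt (contDiffAt_inv ℝ h0)

def ff (v : ℝ) : ℝ := if v ≤ 1 / 2 then 1 else theta v⁻¹

lemma ff_one {v : ℝ} (h : v ≤ 1) : ff v = 1 := by
  unfold ff
  split_ifs with h1
  · rfl
  · exact theta_ge ((one_le_inv₀ (by linarith)).2 h)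

lemma ff_pos {v : ℝ} (h : 0 < v) : ff v = theta v⁻¹ := by
  unfold ff
  split_ifs with h1
  · rw [theta_ge ((one_le_inv₀ (by linarith)).2 (by linarith))]
  · rfl

lemma ff_zero {v : ℝ} (h : 2 ≤ v) : ff v = 0 := by
  rw [ff_pos (by linarith), theta_le]
  rw [one_div]
  exact inv_anti₀ (by norm_num) h

lemma ff_deriv (v : ℝ) : HasDerivAt ff (-aa v) v := by
  by_cases h : v < 1
  · have : ff =ᶠ[𝓝 v] fun _ => 1 := by
      filter_upwards [gt_mem_nhds h] with s hs
      exact ff_one hs.le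
    rw [aa_zero h.le, neg_zero]
    exact (hasDerivAt_const v (1:ℝ)).congr_of_eventuallyEq this
  · have h0 : 0 < v := by linarith
    have : ff =ᶠ[𝓝 v] fun s => theta s⁻¹ := by
      filter_upwards [lt_mem_nhds h0] with s hs
      exact ff_pos hs
    refine HasDerivAt.congr_of_eventuallyEq ?_ this
    have h2 := (theta_deriv v⁻¹).comp v (hasDerivAt_inv h0.ne')
    have e : -aa v = omegaFun v⁻¹ * -(v ^ 2)⁻¹ := by unfold aa; field_simp
    rw [e]; exact h2

lemma ff_contDiff : ContDiff ℝ 3 ff := by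
  have : (3 : WithTop ℕ∞) = 2 + 1 := by norm_num
  rw [this, contDiff_succ_iff_deriv]
  refine ⟨fun v => (ff_deriv v).differentiableAt, by simp, ?_⟩
  have : deriv ff = fun v => - aa v := funext fun v => (ff_deriv v).deriv
  rw [this]
  exact aa_contDiff.neg

lemma ff_int : ∫ v in (0:ℝ)..2, ff v = kappa := by
  have hi : ∀ a b, IntervalIntegrable ff volume a b :=
    fun a b => ff_contDiff.continuous.intervalIntegrable a b
  rw [← intervalIntegral.integral_add_adjacent_intervals (hi 0 (1/2)) (hi (1/2) 2)]
  have h1 : ∫ v in (0:ℝ)..(1/2), ff v = 1 / 2 := by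
    rw [intervalIntegral.integral_congr (g := fun _ => 1)]
    · simp
    · intro t ht
      rw [uIcc_of_le (by norm_num)] at ht
      exact ff_one (by linarith [ht.2])
  have h2 : ∫ v in (1/2:ℝ)..2, ff v =
      (2 * ff 2 - pfun 2⁻¹) - ((1/2) * ff (1/2) - pfun (1/2)⁻¹) := by
    refine intervalIntegral.integral_eq_sub_of_hasDerivAt (f := fun v => v * ff v - pfun v⁻¹)
      ?_ (hi _ _)
    intro v hv
    rw [uIcc_of_le (by norm_num)] at hv
    have h0 : 0 < v := by linarith [hv.1]
    have h3 := ((hasDerivAt_id v).mul (ff_deriv v)).sub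
      ((pfun_deriv v⁻¹).comp v (hasDerivAt_inv h0.ne'))
    have e : ff v = 1 * ff v + id v * -aa v - rho1 v⁻¹ * -(v ^ 2)⁻¹ := by
      simp only [id, aa, rho1]
      field_simp
      ring
    rw [e]; exact h3
  rw [h1, h2, ff_zero le_rfl, ff_one (by norm_num), pfun_le (by norm_num)]
  unfold kappa; norm_num

lemma sum_range_trunc {f : ℕ → ℝ} {m n : ℕ} (hmn : m ≤ n) (h : ∀ j, m ≤ j → f j = 0) :
    ∑ j ∈ Finset.range n, f j = ∑ j ∈ Finset.range m, f j := by
  symm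
  apply Finset.sum_subset (Finset.range_mono hmn)
  intro j _ hj
  exact h j (by simpa using hj)

lemma pow_deriv_bound {φ φ' : ℝ → ℝ} {a b c : ℝ} (k : ℕ)
    (h0 : φ a = 0) (hd : ∀ t, HasDerivAt φ (φ' t) t)
    (hb : ∀ t ∈ Ico a b, |φ' t| ≤ c * (t - a) ^ k) :
    ∀ t ∈ Icc a b, |φ t| ≤ c * (t - a) ^ (k + 1) / (k + 1) := by
  have hB : ∀ t, HasDerivAt (fun t => c * (t - a) ^ (k + 1) / (k + 1)) (c * (t - a) ^ k) t := by
    intro t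
    have h1 := ((((hasDerivAt_id t).sub_const a).pow (k + 1)).const_mul c).div_const ((k:ℝ) + 1)
    refine HasDerivAt.congr_deriv h1 ?_
    have : (k:ℝ) + 1 ≠ 0 := by positivity
    simp
    field_simp
  intro t ht
  have := image_norm_le_of_norm_deriv_right_le_deriv_boundary (f := φ) (f' := φ') (a := a) (b := b)
    (fun t _ => (hd t).continuousAt.continuousWithinAt) (fun t _ => (hd t).hasDerivWithinAt)
    (B := fun t => c * (t - a) ^ (k + 1) / (k + 1)) (B' := fun t => c * (t - a) ^ k)
    (by simp [h0]) hB hb ht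
  exact this

lemma one_interval {f f1 f2 f3 : ℝ → ℝ} {Z a b : ℝ} (hab : a ≤ b)
    (hf : ∀ t, HasDerivAt f (f1 t) t) (hf1 : ∀ t, HasDerivAt f1 (f2 t) t)
    (hf2 : ∀ t, HasDerivAt f2 (f3 t) t) (hZ : ∀ t ∈ Ico a b, |f3 t| ≤ Z) :
    |(b - a) / 2 * (f a + f b) - (b - a) ^ 2 / 12 * (f1 b - f1 a) - ∫ t in a..b, f t|
      ≤ Z * (b - a) ^ 4 := by
  have e2 := pow_deriv_bound (φ := fun t => f2 t - f2 a) (φ' := f3) (a := a) (b := b) (c := Z) 0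
    (by simp) (fun t => (hf2 t).sub_const _) (by simpa using hZ)
  have e1 := pow_deriv_bound (φ := fun t => f1 t - f1 a - f2 a * (t - a))
    (φ' := fun t => f2 t - f2 a) (a := a) (b := b) (c := Z) 1
    (by simp) (fun t => by
      have := ((hf1 t).sub_const (f1 a)).sub (((hasDerivAt_id t).sub_const a).const_mul (f2 a))
      rw [mul_one] at this; exact this)
    (fun t ht => by have := e2 t ⟨ht.1, ht.2.le⟩; simpa using this)
  have e0 := pow_deriv_bound (φ := fun t => f t - f a - f1 a * (t - a) - f2 a / 2 * (t - a) ^ 2)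
    (φ' := fun t => f1 t - f1 a - f2 a * (t - a)) (a := a) (b := b) (c := Z / 2) 2
    (by simp) (fun t => by
      have := (((hf t).sub_const (f a)).sub (((hasDerivAt_id t).sub_const a).const_mul (f1 a))).sub
        ((((hasDerivAt_id t).sub_const a).pow 2).const_mul (f2 a / 2))
      refine HasDerivAt.congr_deriv this ?_
      simp; ring)
    (fun t ht => by
      have := e1 t ⟨ht.1, ht.2.le⟩
      refine this.trans (le_of_eq ?_)
      push_cast; ring)
  have hcont : Continuous f := continuous_iff_continuousAt.2 fun t => (hf t).continuousAt
  have em := pow_deriv_bound (φ := fun t => (∫ s in a..t, f s) - f a * (t - a)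
      - f1 a / 2 * (t - a) ^ 2 - f2 a / 6 * (t - a) ^ 3)
    (φ' := fun t => f t - f a - f1 a * (t - a) - f2 a / 2 * (t - a) ^ 2)
    (a := a) (b := b) (c := Z / 6) 3
    (by simp) (fun t => by
      have hI : HasDerivAt (fun t => ∫ s in a..t, f s) (f t) t :=
        intervalIntegral.integral_hasDerivAt_right (hcont.intervalIntegrable _ _)
          hcont.stronglyMeasurable.stronglyMeasurableAtFilter hcont.continuousAt
      have := ((hI.sub (((hasDerivAt_id t).sub_const a).const_mul (f a))).sub
        ((((hasDerivAt_id t).sub_const a).pow 2).const_mul (f1 a / 2))).sub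
        ((((hasDerivAt_id t).sub_const a).pow 3).const_mul (f2 a / 6))
      refine HasDerivAt.congr_deriv this ?_
      simp; ring)
    (fun t ht => by
      have := e0 t ⟨ht.1, ht.2.le⟩
      refine this.trans (le_of_eq ?_)
      push_cast; ring)
  have r1 := e1 b ⟨hab, le_rfl⟩
  have r0 := e0 b ⟨hab, le_rfl⟩
  have rm := em b ⟨hab, le_rfl⟩
  beta_reduce at r1 r0 rm
  set h := b - a with hh
  have hh0 : 0 ≤ h := by linarith
  set I := ∫ t in a..b, f t
  set R1 := f1 b - f1 a - f2 a * h with hR1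
  set R0 := f b - f a - f1 a * h - f2 a / 2 * h ^ 2 with hR0
  set Rm := I - f a * h - f1 a / 2 * h ^ 2 - f2 a / 6 * h ^ 3 with hRm
  have id1 : h / 2 * (f a + f b) - h ^ 2 / 12 * (f1 b - f1 a) - I
      = h / 2 * R0 - h ^ 2 / 12 * R1 - Rm := by
    rw [hR1, hR0, hRm]; ring
  rw [id1]
  have b1 : |h ^ 2 / 12 * R1| ≤ h ^ 2 / 12 * (Z * h ^ 2 / 2) := by
    rw [abs_mul, abs_of_nonneg (by positivity)]
    refine mul_le_mul_of_nonneg_left (r1.trans (le_of_eq ?_)) (by positivity)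
    push_cast; ring
  have b0 : |h / 2 * R0| ≤ h / 2 * (Z * h ^ 3 / 6) := by
    rw [abs_mul, abs_of_nonneg (by positivity)]
    refine mul_le_mul_of_nonneg_left (r0.trans (le_of_eq ?_)) (by positivity)
    push_cast; ring
  have bm : |Rm| ≤ Z * h ^ 4 / 24 := by
    refine rm.trans (le_of_eq ?_)
    push_cast; ring
  have t1 := abs_sub (h / 2 * R0 - h ^ 2 / 12 * R1) Rm
  have t2 := abs_sub (h / 2 * R0) (h ^ 2 / 12 * R1)
  have hZh : 0 ≤ Z * h ^ 4 := by
    have := (abs_nonneg _).trans bm; linarith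
  nlinarith

lemma trap (f : ℝ → ℝ) (hf : ContDiff ℝ 3 f) (h0 : ∀ v, 2 ≤ v → f v = 0)
    (hd0 : deriv f 0 = 0) :
    ∃ C : ℝ, 0 ≤ C ∧ ∀ y : ℝ, 0 < y → y ≤ 1 → ∀ n : ℕ, 2 ≤ n * y →
      |y * (f 0 / 2 + ∑ j ∈ Finset.range n, f (y * (j + 1))) - ∫ v in (0:ℝ)..2, f v| ≤ C * y ^ 3 := by
  have hf1 : ∀ t, HasDerivAt f (deriv f t) t := fun t =>
    ((hf.differentiable (by norm_num)) t).hasDerivAt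
  have c1 : ContDiff ℝ 2 (deriv f) := by
    have : ContDiff ℝ (2 + 1) f := by norm_num; exact hf
    exact (contDiff_succ_iff_deriv.1 this).2.2
  have c2 : ContDiff ℝ 1 (deriv (deriv f)) := by
    have : ContDiff ℝ (1 + 1) (deriv f) := by norm_num; exact c1
    exact (contDiff_succ_iff_deriv.1 this).2.2
  have hf2 : ∀ t, HasDerivAt (deriv f) (deriv (deriv f) t) t := fun t =>
    ((c1.differentiable (by norm_num)) t).hasDerivAt
  have hf3 : ∀ t, HasDerivAt (deriv (deriv f)) (deriv (deriv (deriv f)) t) t := fun t =>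
    ((c2.differentiable (by norm_num)) t).hasDerivAt
  have hc : Continuous (deriv (deriv (deriv f))) := c2.continuous_deriv (by norm_num)
  obtain ⟨Z, hZ⟩ := (isCompact_Icc (a := (0:ℝ)) (b := 4)).exists_bound_of_continuousOn hc.continuousOn
  have hZ0 : 0 ≤ Z := (norm_nonneg _).trans (hZ 0 (by norm_num))
  refine ⟨4 * Z, by positivity, ?_⟩
  intro y hy hy1 n hn
  set m := ⌈2 / y⌉₊ with hm
  have hm1 : 2 / y ≤ m := Nat.le_ceil _
  have hm2 : (m:ℝ) < 2 / y + 1 := Nat.ceil_lt_add_one (by positivity)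
  have hmn : m ≤ n := by
    rw [hm, Nat.ceil_le, div_le_iff₀ hy]; exact hn
  have hmy : 2 ≤ m * y := by rwa [div_le_iff₀ hy] at hm1
  have hmy2 : m * y ≤ 3 := by
    have : m * y ≤ (2 / y + 1) * y := by gcongr
    have h3 : (2 / y + 1) * y = 2 + y := by field_simp
    linarith
  clear_value m
  rw [sum_range_trunc (f := fun j => f (y * (j + 1))) hmn]
  swap
  · intro j hj
    apply h0
    have : (m:ℝ) ≤ j := by exact_mod_cast hj
    nlinarith
  -- sum over intervals
  have hsum : ∀ k : ℕ, k * y ≤ 4 →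
      |∑ j ∈ Finset.range k, (y / 2 * (f (j * y) + f ((j + 1 : ℕ) * y)))
        - y ^ 2 / 12 * (deriv f (k * y) - deriv f 0) - ∫ t in (0:ℝ)..(k * y), f t| ≤ k * (Z * y ^ 4) := by
    intro k
    induction k with
    | zero => intro _; simp
    | succ k ih =>
      intro hk
      have hk' : ((k + 1 : ℕ) : ℝ) * y = k * y + y := by push_cast; ring
      have ih' := ih (by linarith)
      have hone := one_interval (a := k * y) (b := (k + 1 : ℕ) * y) (Z := Z) (by linarith)
        hf1 hf2 hf3 (fun t ht => hZ t ⟨le_trans (by positivity) ht.1, ht.2.le.trans hk⟩)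
      have hd : ((k + 1 : ℕ) : ℝ) * y - k * y = y := by rw [hk']; ring
      rw [hd] at hone
      have hi : ∀ a b, IntervalIntegrable f volume a b :=
        fun a b => hf.continuous.intervalIntegrable a b
      rw [Finset.sum_range_succ,
        ← intervalIntegral.integral_add_adjacent_intervals (hi 0 (k * y)) (hi (k * y) _)]
      have := abs_add_le _ _ |>.trans (add_le_add ih' hone)
      calc _ = _ := by congr 1; ring
        _ ≤ _ := this
        _ = _ := by push_cast; ring
  have hfin := hsum (m + 1) (by push_cast; linarith)
  have e1 : deriv f ((m + 1 : ℕ) * y) = 0 := by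
    have : f =ᶠ[𝓝 ((m + 1 : ℕ) * y)] fun _ => 0 := by
      have h2 : 2 < ((m + 1 : ℕ):ℝ) * y := by push_cast; linarith
      filter_upwards [lt_mem_nhds h2] with v hv
      exact h0 v hv.le
    rw [this.deriv_eq]; simp
  have e4 : ∫ v in (0:ℝ)..((m + 1 : ℕ) * y), f v = ∫ v in (0:ℝ)..2, f v := by
    have hi : ∀ a b, IntervalIntegrable f volume a b :=
      fun a b => hf.continuous.intervalIntegrable a b
    rw [← intervalIntegral.integral_add_adjacent_intervals (hi 0 2) (hi 2 _)]
    rw [intervalIntegral.integral_congr (a := 2) (g := fun _ => 0)]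
    · simp
    · intro t ht
      rw [uIcc_of_le (by push_cast; linarith)] at ht
      exact h0 t ht.1
  have e5 : ∑ j ∈ Finset.range (m + 1), (y / 2 * (f (j * y) + f ((j + 1 : ℕ) * y)))
      = y * (f 0 / 2 + ∑ j ∈ Finset.range m, f (y * (j + 1))) := by
    rw [← Finset.mul_sum, Finset.sum_add_distrib, Finset.sum_range_succ', Finset.sum_range_succ]
    have hz : f ((m + 1 : ℕ) * y) = 0 := h0 _ (by push_cast; linarith)
    rw [hz]
    have : ∀ j : ℕ, ((j + 1 : ℕ) : ℝ) * y = y * (j + 1) := by intro j; push_cast; ring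
    simp only [this]
    simp
    ring
  rw [e1, e4, hd0, e5] at hfin
  simp only [sub_zero, mul_zero] at hfin
  refine hfin.trans ?_
  have : ((m + 1 : ℕ):ℝ) * y ≤ 4 := by push_cast; linarith
  calc ((m + 1 : ℕ):ℝ) * (Z * y ^ 4) = (((m + 1 : ℕ):ℝ) * y) * (Z * y ^ 3) := by ring
    _ ≤ 4 * (Z * y ^ 3) := by gcongr
    _ = _ := by ring

def k1 (s : ℝ) : ℝ := kappa - ∑' j : ℕ, (1 / ((j:ℝ) + 1)) * omegaFun (|s| / ((j:ℝ) + 1))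

lemma k1_term_zero {s : ℝ} {n j : ℕ} (hs : 2 * |s| ≤ n) (hj : n ≤ j) :
    (1 / ((j:ℝ) + 1)) * omegaFun (|s| / ((j:ℝ) + 1)) = 0 := by
  have : (n:ℝ) ≤ j := by exact_mod_cast hj
  rw [omega_zero_le, mul_zero]
  rw [div_le_iff₀ (by positivity)]
  linarith

lemma k1_eq {s : ℝ} {n : ℕ} (hs : 2 * |s| ≤ n) :
    k1 s = kappa - ∑ j ∈ Finset.range n, (1 / ((j:ℝ) + 1)) * omegaFun (|s| / ((j:ℝ) + 1)) := by
  unfold k1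
  rw [tsum_eq_sum]
  intro j hj
  exact k1_term_zero hs (by simpa using hj)

lemma k1_even (s : ℝ) : k1 (-s) = k1 s := by simp [k1]

lemma k1_cont : Continuous k1 := by
  rw [continuous_iff_continuousAt]
  intro s
  obtain ⟨n, hn⟩ := exists_nat_gt (2 * |s|)
  have h1 : ∀ᶠ t : ℝ in 𝓝 s, 2 * |t| < (n:ℝ) :=
    (continuous_const.mul continuous_abs).continuousAt.eventually_lt continuousAt_const hn
  have h2 : k1 =ᶠ[𝓝 s] fun t => kappa - ∑ j ∈ Finset.range n,
      (1 / ((j:ℝ) + 1)) * omegaFun (|t| / ((j:ℝ) + 1)) := by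
    filter_upwards [h1] with t ht
    exact k1_eq ht.le
  refine ContinuousAt.congr ?_ h2.symm
  have := omega_cont
  apply Continuous.continuousAt
  fun_prop

lemma k1_bdd : ∃ B : ℝ, 0 ≤ B ∧ ∀ s, |k1 s| ≤ B := by
  obtain ⟨B, hB0, hB⟩ := omega_bdd
  refine ⟨kappa + 4 * B, by have := kappa_nonneg; positivity, fun s => ?_⟩
  have hk := kappa_nonneg
  set n := ⌈2 * |s|⌉₊ with hn
  rw [k1_eq (n := n) (Nat.le_ceil _)]
  have hS0 : 0 ≤ ∑ j ∈ Finset.range n, (1 / ((j:ℝ) + 1)) * omegaFun (|s| / ((j:ℝ) + 1)) :=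
    Finset.sum_nonneg fun j _ => mul_nonneg (by positivity) (omega_nonneg _)
  have hS : ∑ j ∈ Finset.range n, (1 / ((j:ℝ) + 1)) * omegaFun (|s| / ((j:ℝ) + 1)) ≤ 4 * B := by
    by_cases h : |s| ≤ 1 / 2
    · have : ∀ j ∈ Finset.range n, (1 / ((j:ℝ) + 1)) * omegaFun (|s| / ((j:ℝ) + 1)) = 0 := by
        intro j _
        rw [omega_zero_le, mul_zero]
        have : |s| / ((j:ℝ) + 1) ≤ |s| := div_le_self (abs_nonneg _) (by linarith [Nat.cast_nonneg (α := ℝ) j])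
        linarith
      rw [Finset.sum_eq_zero this]; positivity
    · push Not at h
      have hb : ∀ j ∈ Finset.range n,
          (1 / ((j:ℝ) + 1)) * omegaFun (|s| / ((j:ℝ) + 1)) ≤ B / |s| := by
        intro j _
        by_cases h1 : 1 ≤ |s| / ((j:ℝ) + 1)
        · rw [omega_zero_ge h1, mul_zero]; positivity
        · push Not at h1
          rw [div_lt_iff₀ (by positivity), one_mul] at h1
          calc _ ≤ (1 / |s|) * B := by
                apply mul_le_mul _ (hB _) (omega_nonneg _) (by positivity)
                exact one_div_le_one_div_of_le (by linarith) h1.le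
            _ = B / |s| := by ring
      refine (Finset.sum_le_sum hb).trans ?_
      rw [Finset.sum_const, Finset.card_range, nsmul_eq_mul]
      have hn2 : (n:ℝ) < 2 * |s| + 1 := Nat.ceil_lt_add_one (by positivity)
      have hn3 : (n:ℝ) ≤ 4 * |s| := by linarith
      calc (n:ℝ) * (B / |s|) ≤ 4 * |s| * (B / |s|) := by gcongr
        _ = 4 * B := by field_simp
  rw [abs_le]; constructor <;> linarith

def K1 (s : ℝ) : ℝ := ∫ t in (0:ℝ)..s, k1 t

lemma K1_deriv (u : ℝ) : HasDerivAt K1 (k1 u) u :=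
  intervalIntegral.integral_hasDerivAt_right (k1_cont.intervalIntegrable _ _)
    k1_cont.stronglyMeasurable.stronglyMeasurableAtFilter k1_cont.continuousAt

lemma K1_zero : K1 0 = 0 := by simp [K1]

lemma K1_odd (s : ℝ) : K1 (-s) = - K1 s := by
  unfold K1
  have h := intervalIntegral.integral_comp_neg (a := 0) (b := s) (fun t => k1 t)
  simp only [k1_even, neg_zero] at h
  rw [h, intervalIntegral.integral_symm]

lemma K1_eq {s : ℝ} (hs : 0 < s) {n : ℕ} (hn : 2 * s ≤ n) :
    K1 s = kappa * s - ∑ j ∈ Finset.range n, ff (s⁻¹ * (j + 1)) := by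
  have h1 : K1 s = ∫ t in (0:ℝ)..s, (kappa - ∑ j ∈ Finset.range n,
      (1 / ((j:ℝ) + 1)) * omegaFun (t / ((j:ℝ) + 1))) := by
    unfold K1
    apply intervalIntegral.integral_congr
    intro t ht
    rw [uIcc_of_le hs.le] at ht
    simp only
    rw [k1_eq (n := n) (by rw [abs_of_nonneg ht.1]; linarith [ht.2]), abs_of_nonneg ht.1]
  have hd : ∀ t ∈ uIcc 0 s, HasDerivAt
      (fun t => kappa * t - ∑ j ∈ Finset.range n, theta (t / ((j:ℝ) + 1)))
      (kappa - ∑ j ∈ Finset.range n,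
      (1 / ((j:ℝ) + 1)) * omegaFun (t / ((j:ℝ) + 1))) t := by
    intro t _
    refine HasDerivAt.sub ?_ ?_
    · simpa using (hasDerivAt_id t).const_mul kappa
    · refine HasDerivAt.fun_sum fun j _ => ?_
      have := (theta_deriv (t / ((j:ℝ) + 1))).comp t ((hasDerivAt_id t).div_const ((j:ℝ) + 1))
      rw [mul_comm]
      exact this
  rw [h1, intervalIntegral.integral_eq_sub_of_hasDerivAt hd]
  · have : theta 0 = 0 := theta_le (by norm_num)
    simp only [zero_div, this, mul_zero, Finset.sum_const_zero, sub_zero]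
    congr 1
    refine Finset.sum_congr rfl fun j _ => ?_
    rw [ff_pos (by positivity)]
    congr 1
    field_simp
  · apply Continuous.intervalIntegrable
    have := omega_cont
    fun_prop

lemma K1_est : ∃ C : ℝ, 0 ≤ C ∧ ∀ s, |K1 s - Real.sign s / 2| ≤ C / (1 + s ^ 2) := by
  obtain ⟨B, hB0, hB⟩ := k1_bdd
  obtain ⟨C, hC0, hC⟩ := trap ff ff_contDiff (fun v => ff_zero)
    (by rw [(ff_deriv 0).deriv, aa_zero (by norm_num), neg_zero])
  have key : ∀ s : ℝ, 0 < s → |K1 s - 1 / 2| ≤ (2 * B + 1 + 2 * C) / (1 + s ^ 2) := by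
    intro s hs
    rw [le_div_iff₀ (by positivity)]
    by_cases h1 : s ≤ 1
    · have h2 : |K1 s| ≤ B * 1 := by
        unfold K1
        have := intervalIntegral.norm_integral_le_of_norm_le_const (a := 0) (b := s) (f := k1)
          (C := B) (fun x _ => hB x)
        rw [Real.norm_eq_abs, sub_zero, abs_of_pos hs] at this
        refine this.trans ?_
        gcongr
      have h3 : |K1 s - 1 / 2| ≤ B + 1 / 2 := by
        refine (abs_sub _ _).trans ?_
        rw [abs_of_pos (by norm_num : (0:ℝ) < 1 / 2)]; linarith
      have h4 : 1 + s ^ 2 ≤ 2 := by nlinarith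
      calc |K1 s - 1 / 2| * (1 + s ^ 2) ≤ (B + 1 / 2) * 2 := by gcongr
        _ ≤ _ := by linarith
    · push Not at h1
      set n := ⌈2 * s⌉₊
      have hn : 2 * s ≤ n := Nat.le_ceil _
      have h2 := hC s⁻¹ (by positivity) (inv_le_one_of_one_le₀ h1.le) n
        (by rw [← div_eq_mul_inv, le_div_iff₀ hs]; exact hn)
      rw [ff_int, ff_one (by norm_num)] at h2
      rw [K1_eq hs hn]
      have h3 : |s⁻¹ * (1 / 2 + ∑ j ∈ Finset.range n, ff (s⁻¹ * (j + 1))) - kappa| =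
        s⁻¹ * |kappa * s - ∑ j ∈ Finset.range n, ff (s⁻¹ * (j + 1)) - 1 / 2| := by
        rw [← abs_of_pos (inv_pos.2 hs), ← abs_mul, abs_of_pos (inv_pos.2 hs), ← abs_neg]
        congr 1
        field_simp
        ring
      rw [h3] at h2
      set T := |kappa * s - ∑ j ∈ Finset.range n, ff (s⁻¹ * (j + 1)) - 1 / 2|
      have h4 : T ≤ C * s⁻¹ ^ 2 := by
        have : s⁻¹ * T ≤ s⁻¹ * (C * s⁻¹ ^ 2) := by
          rw [show s⁻¹ * (C * s⁻¹ ^ 2) = C * s⁻¹ ^ 3 by ring]; exact h2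
        exact le_of_mul_le_mul_left this (by positivity)
      have h5 : 1 + s ^ 2 ≤ 2 * s ^ 2 := by nlinarith
      calc T * (1 + s ^ 2) ≤ (C * s⁻¹ ^ 2) * (2 * s ^ 2) := by gcongr
        _ = 2 * C := by field_simp
        _ ≤ _ := by linarith
  refine ⟨2 * B + 1 + 2 * C, by positivity, fun s => ?_⟩
  rcases lt_trichotomy s 0 with h | h | h
  · have := key (-s) (by linarith)
    rw [K1_odd, neg_sq] at this
    rw [Real.sign_of_neg h, ← abs_neg]
    refine le_trans (le_of_eq ?_) this
    congr 1; ring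
  · rw [h, K1_zero]; simp; positivity
  · rw [Real.sign_of_pos h]; exact key s h

def cc (x : ℝ) : ℝ := (∑' j : ℕ, (1 / (x * ((j:ℝ) + 1))) * omegaFun (x * ((j:ℝ) + 1))) - kappa / x

lemma cc_est : ∃ C : ℝ, 0 ≤ C ∧ ∀ x, 0 < x → |cc x| ≤ C * x := by
  obtain ⟨C, hC0, hC⟩ := trap rho1 rho1_contDiff (fun v hv => rho1_zero_ge (by linarith)) (by
    have : rho1 =ᶠ[𝓝 0] fun _ => 0 := by
      filter_upwards [gt_mem_nhds (by norm_num : (0:ℝ) < 1 / 2)] with v hv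
      exact rho1_zero_le hv.le
    rw [this.deriv_eq]; simp)
  have hk := kappa_nonneg
  refine ⟨C + kappa, by positivity, fun x hx => ?_⟩
  have e : ∀ j : ℕ, (1 / (x * ((j:ℝ) + 1))) * omegaFun (x * ((j:ℝ) + 1)) = rho1 (x * (j + 1)) := by
    intro j; unfold rho1; ring
  unfold cc
  simp only [e]
  by_cases h1 : x ≤ 1
  · set n := ⌈2 / x⌉₊
    have hn : 2 / x ≤ n := Nat.le_ceil _
    rw [div_le_iff₀ hx] at hn
    rw [tsum_eq_sum (s := Finset.range n)]
    swap
    · intro j hj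
      have : n ≤ j := by simpa using hj
      have : (n:ℝ) ≤ j := by exact_mod_cast this
      exact rho1_zero_ge (by nlinarith)
    have h2 := hC x hx h1 n hn
    rw [rho1_zero_le (by norm_num)] at h2
    change |x * (0 / 2 + _) - kappa| ≤ _ at h2
    have h3 : |x * (0 / 2 + ∑ j ∈ Finset.range n, rho1 (x * (j + 1))) - kappa| =
        x * |∑ j ∈ Finset.range n, rho1 (x * (j + 1)) - kappa / x| := by
      rw [← abs_of_pos hx, ← abs_mul, abs_of_pos hx]
      congr 1
      field_simp
      ring
    rw [h3] at h2
    have h4 : |∑ j ∈ Finset.range n, rho1 (x * (j + 1)) - kappa / x| ≤ C * x ^ 2 := by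
      refine le_of_mul_le_mul_left (h2.trans (le_of_eq ?_)) hx
      ring
    refine h4.trans ?_
    have : x ^ 2 ≤ x := by nlinarith
    nlinarith
  · push Not at h1
    have : ∀ j : ℕ, rho1 (x * (j + 1)) = 0 := by
      intro j
      apply rho1_zero_ge
      have : (0:ℝ) ≤ j := by positivity
      nlinarith
    simp only [this, tsum_zero, zero_sub, abs_neg]
    rw [abs_of_nonneg (by positivity), div_le_iff₀ hx]
    nlinarith [mul_nonneg hC0 hx.le, mul_nonneg hk hx.le]

lemma hFun_eq {x : ℝ} (hx : 0 < x) (y : ℝ) : hFun x y = cc x + x⁻¹ * k1 (y / x) := by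
  have e : ∀ j : ℕ, (1 / (x * ((j : ℝ) + 1))) * omegaFun (|y| / (x * ((j : ℝ) + 1)))
      = x⁻¹ * ((1 / ((j:ℝ) + 1)) * omegaFun (|y / x| / ((j:ℝ) + 1))) := by
    intro j
    rw [abs_div, abs_of_pos hx, div_div]
    field_simp
  have s1 : Summable fun j : ℕ => (1 / (x * ((j:ℝ) + 1))) * omegaFun (x * ((j:ℝ) + 1)) := by
    obtain ⟨n, hn⟩ := exists_nat_gt (1 / x)
    rw [div_lt_iff₀ hx] at hn
    apply summable_of_ne_finset_zero (s := Finset.range n)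
    intro j hj
    have : n ≤ j := by simpa using hj
    have : (n:ℝ) ≤ j := by exact_mod_cast this
    rw [omega_zero_ge (by nlinarith), mul_zero]
  have s2 : Summable fun j : ℕ => (1 / ((j:ℝ) + 1)) * omegaFun (|y / x| / ((j:ℝ) + 1)) := by
    obtain ⟨n, hn⟩ := exists_nat_gt (2 * |y / x|)
    apply summable_of_ne_finset_zero (s := Finset.range n)
    intro j hj
    exact k1_term_zero hn.le (by simpa using hj)
  unfold hFun cc k1
  simp only [mul_sub, e]
  rw [s1.tsum_sub (s2.mul_left _), tsum_mul_left]
  ring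

/-- the `i`-th component of the gradient of `F` -/
def gL (A : Matrix (Fin 4) (Fin 4) ℤ) (i : Fin 4) : (Fin 4 → ℝ) →L[ℝ] ℝ :=
  ∑ j, (A i j : ℝ) • ContinuousLinearMap.proj (R := ℝ) (φ := fun _ : Fin 4 => ℝ) j

lemma gL_apply (A : Matrix (Fin 4) (Fin 4) ℤ) (i : Fin 4) (z : Fin 4 → ℝ) :
    gL A i z = ∑ j, (A i j : ℝ) * z j := by
  simp [gL, sum_apply]

def ev (i : Fin 4) : Fin 4 → ℝ := Pi.single i 1

lemma ev_norm (i : Fin 4) : ‖ev i‖ = 1 := by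
  unfold ev; rw [Pi.norm_single]; simp

lemma gL_ev (A : Matrix (Fin 4) (Fin 4) ℤ) (i k : Fin 4) : gL A i (ev k) = A i k := by
  rw [gL_apply]; simp [ev, Pi.single_apply]

def GA (A : Matrix (Fin 4) (Fin 4) ℤ) (z : Fin 4 → ℝ) : ℝ := ∑ i, (gL A i z) ^ 2

lemma GA_nonneg (A : Matrix (Fin 4) (Fin 4) ℤ) (z : Fin 4 → ℝ) : 0 ≤ GA A z :=
  Finset.sum_nonneg fun _ _ => sq_nonneg _

lemma gL_sq_le (A : Matrix (Fin 4) (Fin 4) ℤ) (i : Fin 4) (z : Fin 4 → ℝ) :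
    (gL A i z) ^ 2 ≤ GA A z :=
  Finset.single_le_sum (f := fun i => (gL A i z) ^ 2) (fun _ _ => sq_nonneg _) (Finset.mem_univ i)

lemma gL_mul_le (A : Matrix (Fin 4) (Fin 4) ℤ) (i k : Fin 4) (z : Fin 4 → ℝ) :
    |gL A i z * gL A k z| ≤ GA A z := by
  have h1 := gL_sq_le A i z
  have h2 := gL_sq_le A k z
  rw [abs_le]
  constructor <;> nlinarith [sq_nonneg (gL A i z + gL A k z), sq_nonneg (gL A i z - gL A k z)]

lemma GA_cont (A : Matrix (Fin 4) (Fin 4) ℤ) : Continuous (GA A) := by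
  unfold GA; fun_prop

lemma GA_fderiv (A : Matrix (Fin 4) (Fin 4) ℤ) (z : Fin 4 → ℝ) :
    HasFDerivAt (GA A) (∑ i, (2 * gL A i z) • gL A i) z := by
  unfold GA
  refine HasFDerivAt.fun_sum fun i _ => ?_
  have := ((gL A i).hasFDerivAt (x := z)).pow 2
  simpa using this

lemma Fq_cont (A : Matrix (Fin 4) (Fin 4) ℤ) : Continuous (Fq A) := by
  unfold Fq; fun_prop

lemma Fq_eq (A : Matrix (Fin 4) (Fin 4) ℤ) (z : Fin 4 → ℝ) :
    Fq A z = ∑ i, (1 / 2) * (z i * gL A i z) := by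
  unfold Fq
  simp only [gL_apply, Finset.mul_sum]
  refine Finset.sum_congr rfl fun i _ => Finset.sum_congr rfl fun j _ => ?_
  ring

lemma Fq_fderiv (A : Matrix (Fin 4) (Fin 4) ℤ) (hA : A.IsSymm) (z : Fin 4 → ℝ) :
    ∃ φ : (Fin 4 → ℝ) →L[ℝ] ℝ, HasFDerivAt (Fq A) φ z ∧ ∀ k, φ (ev k) = gL A k z := by
  have hfun : Fq A = fun z => ∑ i, (1 / 2) * (z i * gL A i z) := funext (Fq_eq A)
  have h : HasFDerivAt (Fq A) (∑ i, (1 / 2 : ℝ) • (z i • gL A i +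
      gL A i z • ContinuousLinearMap.proj (R := ℝ) (φ := fun _ : Fin 4 => ℝ) i)) z := by
    rw [hfun]
    refine HasFDerivAt.fun_sum fun i _ => ?_
    refine HasFDerivAt.const_mul ?_ _
    exact (hasFDerivAt_apply i z).mul ((gL A i).hasFDerivAt)
  refine ⟨_, h, fun k => ?_⟩
  have hs : ∀ i, (A i k : ℝ) = A k i := by
    intro i; exact_mod_cast hA.apply k i
  simp only [sum_apply, smul_apply,
    add_apply, gL_ev, smul_eq_mul, ContinuousLinearMap.proj_apply, hs]
  rw [← Finset.mul_sum, Finset.sum_add_distrib]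
  have e1 : ∑ i, z i * (A k i : ℝ) = gL A k z := by
    rw [gL_apply]; exact Finset.sum_congr rfl fun _ _ => mul_comm _ _
  have e2 : ∑ i, gL A i z * ev k i = gL A k z := by
    simp [ev, Pi.single_apply]
  rw [e1, e2]; ring

lemma A_consts (A : Matrix (Fin 4) (Fin 4) ℤ) (hdet : A.det ≠ 0) :
    ∃ a c : ℝ, 0 < a ∧ 0 < c ∧ (∀ i j, |(A i j : ℝ)| ≤ a) ∧ (∀ z, c * ‖z‖ ^ 2 ≤ GA A z) ∧
      (∀ i z, |gL A i z| ≤ a * ‖z‖) := by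
  have h1 : ∀ i j, |(A i j : ℝ)| ≤ ∑ i, ∑ j, |(A i j : ℝ)| := by
    intro i j
    refine (Finset.single_le_sum (f := fun j => |(A i j : ℝ)|) (fun _ _ => abs_nonneg _)
      (Finset.mem_univ j)).trans ?_
    exact Finset.single_le_sum (f := fun i => ∑ j, |(A i j : ℝ)|)
      (fun _ _ => Finset.sum_nonneg fun _ _ => abs_nonneg _) (Finset.mem_univ i)
  set a := ∑ i, ∑ j, |(A i j : ℝ)| with ha
  have ha0 : 0 ≤ a := Finset.sum_nonneg fun _ _ => Finset.sum_nonneg fun _ _ => abs_nonneg _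
  let B : Matrix (Fin 4) (Fin 4) ℝ := A.map (fun x => (x : ℝ))
  have hB : B.det ≠ 0 := by
    have : B.det = (A.det : ℝ) := by
      have := (Int.castRingHom ℝ).map_det A
      rw [eq_comm]; simpa using this
    rw [this]; exact_mod_cast hdet
  have hinj : LinearMap.ker (Matrix.mulVecLin B) = ⊥ := by
    rw [LinearMap.ker_eq_bot]
    intro u v huv
    exact Matrix.mulVec_injective_of_isUnit ((Matrix.isUnit_iff_isUnit_det B).2 (isUnit_iff_ne_zero.2 hB)) huv
  obtain ⟨K, hK, hanti⟩ := LinearMap.exists_antilipschitzWith _ hinj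
  have hKz : ∀ z : Fin 4 → ℝ, ‖z‖ ≤ K * ‖fun i => gL A i z‖ := by
    intro z
    have := hanti.le_mul_dist z 0
    rw [dist_zero_right, map_zero, dist_zero_right] at this
    have e : (Matrix.mulVecLin B) z = fun i => gL A i z := by
      ext i
      rw [gL_apply]; simp [B, Matrix.mulVec, dotProduct]
    rwa [e] at this
  have hKpos : (0:ℝ) < K := by exact_mod_cast hK
  refine ⟨a + 1, ((K:ℝ) ^ 2)⁻¹, by positivity, by positivity, fun i j => (h1 i j).trans (by linarith),
    ?_, ?_⟩
  · intro z
    have hs : ‖fun i => gL A i z‖ ^ 2 ≤ GA A z := by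
      have : ‖fun i => gL A i z‖ ≤ Real.sqrt (GA A z) := by
        rw [pi_norm_le_iff_of_nonneg (Real.sqrt_nonneg _)]
        intro i
        exact Real.abs_le_sqrt (gL_sq_le A i z)
      calc _ ≤ Real.sqrt (GA A z) ^ 2 := by gcongr
        _ = _ := Real.sq_sqrt (GA_nonneg A z)
    rw [inv_mul_le_iff₀ (by positivity)]
    calc ‖z‖ ^ 2 ≤ (K * ‖fun i => gL A i z‖) ^ 2 := by gcongr; exact hKz z
      _ = (K:ℝ) ^ 2 * ‖fun i => gL A i z‖ ^ 2 := by ring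
      _ ≤ _ := by gcongr
  · intro i z
    rw [gL_apply]
    refine (Finset.abs_sum_le_sum_abs _ _).trans ?_
    have : ∀ j ∈ Finset.univ, |(A i j : ℝ) * z j| ≤ |(A i j : ℝ)| * ‖z‖ := by
      intro j _
      rw [abs_mul]
      gcongr
      exact norm_le_pi_norm z j
    refine (Finset.sum_le_sum this).trans ?_
    rw [← Finset.sum_mul]
    gcongr
    have : ∑ j, |(A i j : ℝ)| ≤ a := Finset.single_le_sum (f := fun i => ∑ j, |(A i j : ℝ)|)
      (fun _ _ => Finset.sum_nonneg fun _ _ => abs_nonneg _) (Finset.mem_univ i)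
    linarith

/-- diagonal derivative of the regularised vector field -/
def dX (A : Matrix (Fin 4) (Fin 4) ℤ) (δ : ℝ) (i : Fin 4) (z : Fin 4 → ℝ) : ℝ :=
  (A i i : ℝ) / (GA A z + δ) - gL A i z * (∑ k, 2 * gL A k z * (A k i : ℝ)) / (GA A z + δ) ^ 2

def XX (A : Matrix (Fin 4) (Fin 4) ℤ) (δ : ℝ) (i : Fin 4) (z : Fin 4 → ℝ) : ℝ :=
  gL A i z / (GA A z + δ)

lemma XX_fderiv (A : Matrix (Fin 4) (Fin 4) ℤ) {δ : ℝ} (hδ : 0 < δ) (i : Fin 4) (z : Fin 4 → ℝ) :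
    ∃ φ : (Fin 4 → ℝ) →L[ℝ] ℝ, HasFDerivAt (XX A δ i) φ z ∧ φ (ev i) = dX A δ i z := by
  have hne : GA A z + δ ≠ 0 := by have := GA_nonneg A z; positivity
  have h0 := (hasDerivAt_inv hne).comp_hasFDerivAt z ((GA_fderiv A z).add_const δ)
  have h1 := ((gL A i).hasFDerivAt (x := z)).mul h0
  refine ⟨_, h1.congr_of_eventuallyEq (Eventually.of_forall fun y => ?_), ?_⟩
  · simp [XX, div_eq_mul_inv]
  · simp only [add_apply, smul_apply, sum_apply, gL_ev, smul_eq_mul, Function.comp, dX]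
    field_simp
    ring

def Mm (z : Fin 4 → ℝ) : ℝ := ((1 + ‖z‖) ^ 5)⁻¹

lemma Mm_pos (z : Fin 4 → ℝ) : 0 < Mm z := by unfold Mm; positivity

lemma Mm_int : Integrable Mm := by
  have h := integrable_one_add_norm (E := Fin 4 → ℝ) (μ := volume) (r := 5) (by simp; norm_num)
  refine h.congr (Eventually.of_forall fun z => ?_)
  have : (0:ℝ) < 1 + ‖z‖ := by positivity
  simp only [Mm]
  rw [Real.rpow_neg this.le]
  norm_cast

def DD (A : Matrix (Fin 4) (Fin 4) ℤ) (δ : ℝ) (w : (Fin 4 → ℝ) → ℝ) (z : Fin 4 → ℝ) : ℝ :=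
  ∑ i, (fderiv ℝ w z (ev i) * XX A δ i z + w z * dX A δ i z)

/-- smooth functions with decay -/
structure Dec (b : ℝ) (w : (Fin 4 → ℝ) → ℝ) : Prop where
  cd : ContDiff ℝ 1 w
  b0 : 0 ≤ b
  h0 : ∀ z, |w z| ≤ b * Mm z
  h1 : ∀ z, ‖fderiv ℝ w z‖ ≤ b * Mm z

lemma dX_abs (A : Matrix (Fin 4) (Fin 4) ℤ) {a : ℝ} (ha : ∀ i j, |(A i j : ℝ)| ≤ a)
    {δ : ℝ} (hδ : 0 ≤ δ) (i : Fin 4) (z : Fin 4 → ℝ) (hz : 0 < GA A z + δ) :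
    |dX A δ i z| ≤ 9 * a / (GA A z + δ) := by
  have ha0 : 0 ≤ a := (abs_nonneg _).trans (ha 0 0)
  unfold dX
  have h1 : |(A i i : ℝ) / (GA A z + δ)| ≤ a / (GA A z + δ) := by
    rw [abs_div, abs_of_pos hz]; gcongr; exact ha i i
  have h2 : |gL A i z * (∑ k, 2 * gL A k z * (A k i : ℝ))| ≤ 8 * a * (GA A z + δ) := by
    rw [Finset.mul_sum]
    refine (Finset.abs_sum_le_sum_abs _ _).trans ?_
    have : ∀ k ∈ Finset.univ, |gL A i z * (2 * gL A k z * (A k i : ℝ))| ≤ 2 * a * (GA A z + δ) := by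
      intro k _
      have e : gL A i z * (2 * gL A k z * (A k i : ℝ)) = 2 * (A k i : ℝ) * (gL A i z * gL A k z) := by
        ring
      rw [e, abs_mul, abs_mul]
      have := gL_mul_le A i k z
      have h3 := ha k i
      rw [abs_of_pos (by norm_num : (0:ℝ) < 2)]
      gcongr
      linarith
    refine (Finset.sum_le_sum this).trans ?_
    simp; linarith
  have h3 : |gL A i z * (∑ k, 2 * gL A k z * (A k i : ℝ)) / (GA A z + δ) ^ 2| ≤
      8 * a / (GA A z + δ) := by
    rw [abs_div, abs_of_pos (pow_pos hz 2), div_le_div_iff₀ (by positivity) hz]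
    nlinarith
  calc _ ≤ _ := abs_sub _ _
    _ ≤ a / (GA A z + δ) + 8 * a / (GA A z + δ) := add_le_add h1 h3
    _ = _ := by ring

lemma ev_le (φ : (Fin 4 → ℝ) →L[ℝ] ℝ) (i : Fin 4) : |φ (ev i)| ≤ ‖φ‖ := by
  have := φ.le_opNorm (ev i)
  rwa [ev_norm, mul_one] at this

lemma DD_abs (A : Matrix (Fin 4) (Fin 4) ℤ) {a c : ℝ} (ha0 : 0 < a) (hc0 : 0 < c)
    (ha : ∀ i j, |(A i j : ℝ)| ≤ a) (hc : ∀ z, c * ‖z‖ ^ 2 ≤ GA A z)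
    (hg : ∀ i z, |gL A i z| ≤ a * ‖z‖)
    {δ : ℝ} (hδ : 0 ≤ δ) (w : (Fin 4 → ℝ) → ℝ) (z : Fin 4 → ℝ) (hz : z ≠ 0) :
    |DD A δ w z| ≤ 36 * a / c * (‖fderiv ℝ w z‖ / ‖z‖ + |w z| / ‖z‖ ^ 2) := by
  have hz0 : 0 < ‖z‖ := norm_pos_iff.2 hz
  have hG : c * ‖z‖ ^ 2 ≤ GA A z + δ := by have := hc z; linarith
  have hGp : 0 < GA A z + δ := lt_of_lt_of_le (by positivity) hG
  unfold DD
  refine (Finset.abs_sum_le_sum_abs _ _).trans ?_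
  have : ∀ i ∈ Finset.univ, |fderiv ℝ w z (ev i) * XX A δ i z + w z * dX A δ i z| ≤
      9 * a / c * (‖fderiv ℝ w z‖ / ‖z‖ + |w z| / ‖z‖ ^ 2) := by
    intro i _
    have h1 : |XX A δ i z| ≤ 9 * a / c / ‖z‖ := by
      unfold XX
      rw [abs_div, abs_of_pos hGp]
      calc _ ≤ a * ‖z‖ / (c * ‖z‖ ^ 2) := by gcongr; exact hg i z
        _ = a / c / ‖z‖ := by field_simp
        _ ≤ _ := by gcongr; linarith
    have h2 : |dX A δ i z| ≤ 9 * a / c / ‖z‖ ^ 2 := by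
      calc _ ≤ 9 * a / (GA A z + δ) := dX_abs A ha hδ i z hGp
        _ ≤ 9 * a / (c * ‖z‖ ^ 2) := by gcongr
        _ = _ := by field_simp
    calc _ ≤ |fderiv ℝ w z (ev i) * XX A δ i z| + |w z * dX A δ i z| := abs_add_le _ _
      _ = |fderiv ℝ w z (ev i)| * |XX A δ i z| + |w z| * |dX A δ i z| := by rw [abs_mul, abs_mul]
      _ ≤ ‖fderiv ℝ w z‖ * (9 * a / c / ‖z‖) + |w z| * (9 * a / c / ‖z‖ ^ 2) := by
          gcongr; exact ev_le _ _
      _ = _ := by ring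
  refine (Finset.sum_le_sum this).trans ?_
  simp; apply le_of_eq; ring

lemma XX_cont (A : Matrix (Fin 4) (Fin 4) ℤ) {δ : ℝ} (hδ : 0 < δ) (i : Fin 4) :
    Continuous (XX A δ i) := by
  unfold XX
  refine (gL A i).continuous.div ((GA_cont A).add continuous_const) fun z => ?_
  have := GA_nonneg A z; positivity

lemma dX_cont (A : Matrix (Fin 4) (Fin 4) ℤ) {δ : ℝ} (hδ : 0 < δ) (i : Fin 4) :
    Continuous (dX A δ i) := by
  unfold dX
  have hG := GA_cont A
  have h0 : ∀ z, GA A z + δ ≠ 0 := fun z => by have := GA_nonneg A z; positivity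
  refine Continuous.sub (Continuous.div (by fun_prop) (by fun_prop) h0)
    (Continuous.div (by fun_prop) (by fun_prop) fun z => pow_ne_zero _ (h0 z))

lemma fd_cont {w : (Fin 4 → ℝ) → ℝ} (h : ContDiff ℝ 1 w) (v : Fin 4 → ℝ) :
    Continuous fun z => fderiv ℝ w z v :=
  (h.continuous_fderiv (by norm_num)).clm_apply continuous_const

lemma XX_abs (A : Matrix (Fin 4) (Fin 4) ℤ) {δ : ℝ} (hδ : 0 < δ) (i : Fin 4) (z : Fin 4 → ℝ) :
    |XX A δ i z| ≤ 1 + 1 / δ := by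
  have hG := GA_nonneg A z
  have hGp : 0 < GA A z + δ := by positivity
  have hs := gL_sq_le A i z
  unfold XX
  rw [abs_div, abs_of_pos hGp, div_le_iff₀ hGp]
  have h1 : |gL A i z| ≤ 1 + GA A z := by
    have := sq_abs (gL A i z)
    nlinarith [abs_nonneg (gL A i z), sq_nonneg (|gL A i z| - 1)]
  have h2 : (1 + 1 / δ) * (GA A z + δ) = GA A z + δ + GA A z / δ + 1 := by
    field_simp
    ring
  have : 0 ≤ GA A z / δ := by positivity
  linarith

lemma int_of_bdd {f : (Fin 4 → ℝ) → ℝ} (hf : Continuous f) {K : ℝ} (h : ∀ z, |f z| ≤ K * Mm z) :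
    Integrable f :=
  (Mm_int.const_mul K).mono' hf.aestronglyMeasurable (Eventually.of_forall h)

lemma ibp_i (A : Matrix (Fin 4) (Fin 4) ℤ) (hA : A.IsSymm) {δ : ℝ} (hδ : 0 < δ)
    {Ψ ψ : ℝ → ℝ} (hΨ : ∀ y, HasDerivAt Ψ (ψ y) y) (hψ : Continuous ψ) {B : ℝ}
    (hB1 : ∀ y, |Ψ y| ≤ B) (hB2 : ∀ y, |ψ y| ≤ B) {b : ℝ} {w : (Fin 4 → ℝ) → ℝ} (hw : Dec b w)
    (i : Fin 4) :
    Integrable (fun z => Ψ (Fq A z) * (fderiv ℝ w z (ev i) * XX A δ i z + w z * dX A δ i z)) ∧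
    Integrable (fun z => ψ (Fq A z) * gL A i z * (w z * XX A δ i z)) ∧
    ∫ z, Ψ (Fq A z) * (fderiv ℝ w z (ev i) * XX A δ i z + w z * dX A δ i z) =
      - ∫ z, ψ (Fq A z) * gL A i z * (w z * XX A δ i z) := by
  have hB0 : 0 ≤ B := (abs_nonneg _).trans (hB1 0)
  have hb0 := hw.b0
  have hΨc : Continuous Ψ := continuous_iff_continuousAt.2 fun y => (hΨ y).continuousAt
  have hF := Fq_cont A
  have hX := XX_cont A hδ i
  have hdX := dX_cont A hδ i
  have hfd := fd_cont hw.cd (ev i)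
  have hwc := hw.cd.continuous
  obtain ⟨a, ha⟩ : ∃ a : ℝ, ∀ i j, |(A i j : ℝ)| ≤ a := by
    refine ⟨∑ i, ∑ j, |(A i j : ℝ)|, fun i j => ?_⟩
    refine (Finset.single_le_sum (f := fun j => |(A i j : ℝ)|) (fun _ _ => abs_nonneg _)
      (Finset.mem_univ j)).trans ?_
    exact Finset.single_le_sum (f := fun i => ∑ j, |(A i j : ℝ)|)
      (fun _ _ => Finset.sum_nonneg fun _ _ => abs_nonneg _) (Finset.mem_univ i)
  have ha0 : 0 ≤ a := (abs_nonneg _).trans (ha 0 0)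
  have hdXb : ∀ z, |dX A δ i z| ≤ 9 * a / δ := by
    intro z
    have hG := GA_nonneg A z
    refine (dX_abs A ha hδ.le i z (by positivity)).trans ?_
    gcongr; linarith
  have hfdb : ∀ z, |fderiv ℝ w z (ev i)| ≤ b * Mm z := fun z => (ev_le _ _).trans (hw.h1 z)
  have hXb := XX_abs A hδ i
  have I1 : Integrable (fun z => Ψ (Fq A z) * (fderiv ℝ w z (ev i) * XX A δ i z + w z * dX A δ i z)) := by
    refine int_of_bdd (K := B * (b * (1 + 1 / δ) + b * (9 * a / δ))) (by fun_prop) fun z => ?_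
    have hM := (Mm_pos z).le
    rw [abs_mul]
    calc _ ≤ B * ((b * Mm z) * (1 + 1 / δ) + (b * Mm z) * (9 * a / δ)) := by
          gcongr
          · exact hB1 _
          · refine (abs_add_le _ _).trans ?_
            rw [abs_mul, abs_mul]
            gcongr
            · exact hfdb z
            · exact hXb z
            · exact hw.h0 z
            · exact hdXb z
      _ = _ := by ring
  have hgX : ∀ z, |gL A i z * XX A δ i z| ≤ 1 := by
    intro z
    have hG := GA_nonneg A z
    have hGp : 0 < GA A z + δ := by positivity
    have e : gL A i z * XX A δ i z = (gL A i z) ^ 2 / (GA A z + δ) := by unfold XX; ring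
    rw [e, abs_of_nonneg (by positivity), div_le_one hGp]
    have := gL_sq_le A i z; linarith
  have hgc := (gL A i).continuous
  have I2 : Integrable (fun z => ψ (Fq A z) * gL A i z * (w z * XX A δ i z)) := by
    refine int_of_bdd (K := B * b) (by fun_prop) fun z => ?_
    have hM := (Mm_pos z).le
    have e : ψ (Fq A z) * gL A i z * (w z * XX A δ i z) =
      ψ (Fq A z) * w z * (gL A i z * XX A δ i z) := by ring
    rw [e, abs_mul, abs_mul]
    calc _ ≤ B * (b * Mm z) * 1 := by
          gcongr
          · exact hB2 _
          · exact hw.h0 z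
          · exact hgX z
      _ = _ := by ring
  have I3 : Integrable (fun z => Ψ (Fq A z) * (w z * XX A δ i z)) := by
    refine int_of_bdd (K := B * (b * (1 + 1 / δ))) (by fun_prop) fun z => ?_
    have hM := (Mm_pos z).le
    rw [abs_mul, abs_mul]
    calc _ ≤ B * ((b * Mm z) * (1 + 1 / δ)) := by
          gcongr
          · exact hB1 _
          · exact hw.h0 z
          · exact hXb z
      _ = _ := by ring
  have d1 : ∀ z, ∃ φ : (Fin 4 → ℝ) →L[ℝ] ℝ, HasFDerivAt (fun z => Ψ (Fq A z)) φ z ∧ φ (ev i) = ψ (Fq A z) * gL A i z := by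
    intro z
    obtain ⟨φ, h1, h2⟩ := Fq_fderiv A hA z
    refine ⟨_, (hΨ (Fq A z)).comp_hasFDerivAt z h1, ?_⟩
    simp [h2]
  have d2 : ∀ z, ∃ φ : (Fin 4 → ℝ) →L[ℝ] ℝ, HasFDerivAt (fun z => w z * XX A δ i z) φ z ∧ φ (ev i) =
      fderiv ℝ w z (ev i) * XX A δ i z + w z * dX A δ i z := by
    intro z
    obtain ⟨φ, h1, h2⟩ := XX_fderiv A hδ i z
    refine ⟨_, ((hw.cd.differentiable (by norm_num)) z).hasFDerivAt.mul h1, ?_⟩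
    simp [h2]; ring
  have e1 : ∀ z, fderiv ℝ (fun z => Ψ (Fq A z)) z (ev i) = ψ (Fq A z) * gL A i z := by
    intro z; obtain ⟨φ, h1, h2⟩ := d1 z; rw [h1.fderiv, h2]
  have e2 : ∀ z, fderiv ℝ (fun z => w z * XX A δ i z) z (ev i) =
      fderiv ℝ w z (ev i) * XX A δ i z + w z * dX A δ i z := by
    intro z; obtain ⟨φ, h1, h2⟩ := d2 z; rw [h1.fderiv, h2]
  refine ⟨I1, I2, ?_⟩
  have := integral_mul_fderiv_eq_neg_fderiv_mul_of_integrable (μ := (volume : Measure (Fin 4 → ℝ)))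
    (f := fun z => Ψ (Fq A z)) (g := fun z => w z * XX A δ i z) (v := ev i) (𝕜 := ℝ)
    (by simpa only [e1] using I2) (by simpa only [e2] using I1) I3
    (fun z _ => (d1 z).choose_spec.1.differentiableAt)
    (fun z _ => (d2 z).choose_spec.1.differentiableAt)
  simpa only [e1, e2] using this

lemma ibp_delta (A : Matrix (Fin 4) (Fin 4) ℤ) (hA : A.IsSymm) {δ : ℝ} (hδ : 0 < δ)
    {Ψ ψ : ℝ → ℝ} (hΨ : ∀ y, HasDerivAt Ψ (ψ y) y) (hψ : Continuous ψ) {B : ℝ}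
    (hB1 : ∀ y, |Ψ y| ≤ B) (hB2 : ∀ y, |ψ y| ≤ B) {b : ℝ} {w : (Fin 4 → ℝ) → ℝ} (hw : Dec b w) :
    ∫ z, Ψ (Fq A z) * DD A δ w z = - ∫ z, ψ (Fq A z) * w z * (GA A z / (GA A z + δ)) := by
  have h := ibp_i A hA hδ hΨ hψ hB1 hB2 hw
  have e1 : ∀ z, Ψ (Fq A z) * DD A δ w z = ∑ i, Ψ (Fq A z) *
      (fderiv ℝ w z (ev i) * XX A δ i z + w z * dX A δ i z) := by
    intro z; unfold DD; rw [Finset.mul_sum]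
  have e2 : ∀ z, ψ (Fq A z) * w z * (GA A z / (GA A z + δ)) =
      ∑ i, ψ (Fq A z) * gL A i z * (w z * XX A δ i z) := by
    intro z
    unfold XX
    have : GA A z / (GA A z + δ) = ∑ i, gL A i z * gL A i z / (GA A z + δ) := by
      rw [← Finset.sum_div]; congr 1; unfold GA
      exact Finset.sum_congr rfl fun _ _ => by ring
    rw [this, Finset.mul_sum]
    exact Finset.sum_congr rfl fun _ _ => by ring
  simp only [e1, e2]
  rw [integral_finsetSum _ fun i _ => (h i).1, integral_finsetSum _ fun i _ => (h i).2.1,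
    ← Finset.sum_neg_distrib]
  exact Finset.sum_congr rfl fun i _ => (h i).2.2

def EE (z : Fin 4 → ℝ) : ℝ := ((1 + ‖z‖) ^ 4 * ‖z‖ ^ 2)⁻¹

lemma EE_nonneg (z : Fin 4 → ℝ) : 0 ≤ EE z := by unfold EE; positivity

lemma one_add_int2 : Integrable (fun y : ℝ => ((1 + ‖y‖) ^ 2)⁻¹) := by
  have h := integrable_one_add_norm (E := ℝ) (μ := volume) (r := 2) (by simp)
  refine h.congr (Eventually.of_forall fun z => ?_)
  have : (0:ℝ) < 1 + ‖z‖ := by positivity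
  simp only
  rw [Real.rpow_neg this.le]
  norm_cast

lemma EE_int : Integrable EE := by
  have := (integrable_fun_norm_addHaar (E := Fin 4 → ℝ) volume
    (f := fun r : ℝ => ((1 + r) ^ 4 * r ^ 2)⁻¹)).2 ?_
  · exact this
  · have hf : Module.finrank ℝ (Fin 4 → ℝ) - 1 = 3 := by simp
    rw [hf]
    refine one_add_int2.integrableOn.mono' ?_ ?_
    · exact (by fun_prop : Measurable _).aestronglyMeasurable
    · refine (ae_restrict_mem measurableSet_Ioi).mono fun y hy => ?_
      have hy : (0:ℝ) < y := hy
      rw [smul_eq_mul, Real.norm_of_nonneg (by positivity), Real.norm_of_nonneg hy.le,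
        ← div_eq_mul_inv, div_le_iff₀ (by positivity)]
      have : ((1 + y) ^ 2)⁻¹ * ((1 + y) ^ 4 * y ^ 2) = (1 + y) ^ 2 * y ^ 2 := by
        field_simp
      rw [this]
      nlinarith [pow_pos hy 2, pow_pos hy 3, pow_pos hy 4]

lemma ae_ne_zero : ∀ᵐ z : Fin 4 → ℝ, z ≠ 0 := by
  have := Measure.ae_ne (volume : Measure (Fin 4 → ℝ)) 0
  exact this

/-- constants attached to the matrix -/
structure AC (A : Matrix (Fin 4) (Fin 4) ℤ) (a c : ℝ) : Prop where
  sy : A.IsSymm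
  a0 : 0 < a
  c0 : 0 < c
  ha : ∀ i j, |(A i j : ℝ)| ≤ a
  hc : ∀ z, c * ‖z‖ ^ 2 ≤ GA A z
  hg : ∀ i z, |gL A i z| ≤ a * ‖z‖

lemma DD_bd {A : Matrix (Fin 4) (Fin 4) ℤ} {a c : ℝ} (H : AC A a c) {δ : ℝ} (hδ : 0 ≤ δ)
    {b : ℝ} {w : (Fin 4 → ℝ) → ℝ} (hw : Dec b w) (z : Fin 4 → ℝ) (hz : z ≠ 0) :
    |DD A δ w z| ≤ 36 * a / c * b * EE z := by
  have hz0 : 0 < ‖z‖ := norm_pos_iff.2 hz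
  have ha := H.a0
  have hc := H.c0
  refine (DD_abs A H.a0 H.c0 H.ha H.hc H.hg hδ w z hz).trans ?_
  calc _ ≤ 36 * a / c * (b * Mm z / ‖z‖ + b * Mm z / ‖z‖ ^ 2) := by
        gcongr
        · exact hw.h1 z
        · exact hw.h0 z
    _ = _ := by
        unfold Mm EE
        field_simp
        ring

lemma DD_meas (A : Matrix (Fin 4) (Fin 4) ℤ) (δ : ℝ) {w : (Fin 4 → ℝ) → ℝ} (hw : ContDiff ℝ 1 w) :
    Measurable (DD A δ w) := by
  unfold DD
  have h1 := fun i => (fd_cont hw (ev i)).measurable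
  have h2 := hw.continuous.measurable
  have h3 : ∀ i, Measurable (gL A i) := fun i => (gL A i).continuous.measurable
  have h4 := (GA_cont A).measurable
  have h5 : ∀ i, Measurable (XX A δ i) := fun i => by
    unfold XX; exact (h3 i).div (h4.add_const δ)
  have h6 : ∀ i, Measurable (dX A δ i) := fun i => by
    unfold dX; fun_prop
  fun_prop

lemma DD_int {A : Matrix (Fin 4) (Fin 4) ℤ} {a c : ℝ} (H : AC A a c)
    {b : ℝ} {w : (Fin 4 → ℝ) → ℝ} (hw : Dec b w) {Ψ : ℝ → ℝ} (hΨ : Measurable Ψ) {B : ℝ}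
    (hB : ∀ y, |Ψ y| ≤ B) : Integrable fun z => Ψ (Fq A z) * DD A 0 w z := by
  refine (EE_int.const_mul (B * (36 * a / c * b))).mono' ?_ ?_
  · exact ((hΨ.comp (Fq_cont A).measurable).mul (DD_meas A 0 hw.cd)).aestronglyMeasurable
  · filter_upwards [ae_ne_zero] with z hz
    have hB0 : 0 ≤ B := (abs_nonneg _).trans (hB 0)
    rw [Real.norm_eq_abs, abs_mul, mul_assoc]
    gcongr
    · exact hB _
    · exact DD_bd H le_rfl hw z hz

lemma ibp_lim {A : Matrix (Fin 4) (Fin 4) ℤ} {a c : ℝ} (H : AC A a c)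
    {Ψ ψ : ℕ → ℝ → ℝ} (hΨ : ∀ n y, HasDerivAt (Ψ n) (ψ n y) y) (hψ : ∀ n, Continuous (ψ n)) {B : ℝ}
    (hB1 : ∀ n y, |Ψ n y| ≤ B) (hB2 : ∀ n y, |ψ n y| ≤ B) {Ψ' ψ' : ℝ → ℝ}
    (hl1 : ∀ y, Tendsto (fun n => Ψ n y) atTop (𝓝 (Ψ' y)))
    (hl2 : ∀ y, Tendsto (fun n => ψ n y) atTop (𝓝 (ψ' y)))
    {b : ℝ} {w : (Fin 4 → ℝ) → ℝ} (hw : Dec b w) :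
    ∫ z, Ψ' (Fq A z) * DD A 0 w z = - ∫ z, ψ' (Fq A z) * w z := by
  have hB0 : 0 ≤ B := (abs_nonneg _).trans (hB1 0 0)
  have hF := Fq_cont A
  have hδ : ∀ n : ℕ, (0:ℝ) < 1 / ((n:ℝ) + 1) := fun n => by positivity
  have hδl : Tendsto (fun n : ℕ => 1 / ((n:ℝ) + 1)) atTop (𝓝 0) := tendsto_one_div_add_atTop_nhds_zero_nat
  have hΨc : ∀ n, Continuous (Ψ n) := fun n => continuous_iff_continuousAt.2 fun y => (hΨ n y).continuousAt
  have hGp : ∀ z : Fin 4 → ℝ, z ≠ 0 → 0 < GA A z := fun z hz =>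
    lt_of_lt_of_le (by have := H.c0; have := norm_pos_iff.2 hz; positivity) (H.hc z)
  have hGl : ∀ z, Tendsto (fun n : ℕ => GA A z + 1 / ((n:ℝ) + 1)) atTop (𝓝 (GA A z + 0)) :=
    fun z => tendsto_const_nhds.add hδl
  have L1 : Tendsto (fun n : ℕ => ∫ z, Ψ n (Fq A z) * DD A (1 / ((n:ℝ) + 1)) w z) atTop
      (𝓝 (∫ z, Ψ' (Fq A z) * DD A 0 w z)) := by
    refine tendsto_integral_of_dominated_convergence (fun z => B * (36 * a / c * b * EE z)) ?_ ?_ ?_ ?_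
    · intro n
      exact (((hΨc n).comp hF).measurable.mul (DD_meas A _ hw.cd)).aestronglyMeasurable
    · exact (EE_int.const_mul _).const_mul _
    · intro n
      filter_upwards [ae_ne_zero] with z hz
      rw [Real.norm_eq_abs, abs_mul]
      gcongr
      · exact hB1 _ _
      · exact DD_bd H (hδ n).le hw z hz
    · filter_upwards [ae_ne_zero] with z hz
      refine (hl1 _).mul ?_
      have hne : GA A z + 0 ≠ 0 := by have := hGp z hz; positivity
      unfold DD XX dX
      refine tendsto_finsetSum _ fun i _ => ?_
      refine ((tendsto_const_nhds.div (hGl z) hne).const_mul _).add (Tendsto.const_mul _ ?_)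
      exact (tendsto_const_nhds.div (hGl z) hne).sub
        (tendsto_const_nhds.div ((hGl z).pow 2) (pow_ne_zero _ hne))
  have L2 : Tendsto (fun n : ℕ => ∫ z, ψ n (Fq A z) * w z * (GA A z / (GA A z + 1 / ((n:ℝ) + 1)))) atTop
      (𝓝 (∫ z, ψ' (Fq A z) * w z)) := by
    refine tendsto_integral_of_dominated_convergence (fun z => B * (b * Mm z)) ?_ ?_ ?_ ?_
    · intro n
      exact ((((hψ n).comp hF).measurable.mul hw.cd.continuous.measurable).mul
        ((GA_cont A).measurable.div ((GA_cont A).measurable.add_const _))).aestronglyMeasurable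
    · exact (Mm_int.const_mul _).const_mul _
    · intro n
      refine Eventually.of_forall fun z => ?_
      have hG := GA_nonneg A z
      have := hδ n
      have hb := hw.b0
      have hM := (Mm_pos z).le
      rw [Real.norm_eq_abs, abs_mul, abs_mul]
      have h1 : |GA A z / (GA A z + 1 / ((n:ℝ) + 1))| ≤ 1 := by
        rw [abs_of_nonneg (by positivity), div_le_one (by positivity)]; linarith
      calc _ ≤ B * (b * Mm z) * 1 := by
            gcongr
            · exact hB2 _ _
            · exact hw.h0 z
        _ = _ := by ring
    · filter_upwards [ae_ne_zero] with z hz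
      have hne : GA A z + 0 ≠ 0 := by have := hGp z hz; positivity
      have := ((hl2 (Fq A z)).mul (tendsto_const_nhds (x := w z))).mul
        ((tendsto_const_nhds (x := GA A z)).div (hGl z) hne)
      rwa [add_zero, div_self (hGp z hz).ne', mul_one] at this
  refine tendsto_nhds_unique L1 ?_
  refine L2.neg.congr fun n => ?_
  exact (ibp_delta A H.sy (hδ n) (hΨ n) (hψ n) (hB1 n) (hB2 n) hw).symm

lemma ibp_const {A : Matrix (Fin 4) (Fin 4) ℤ} {a c : ℝ} (H : AC A a c)
    {Ψ ψ : ℝ → ℝ} (hΨ : ∀ y, HasDerivAt Ψ (ψ y) y) (hψ : Continuous ψ) {B B' : ℝ}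
    (hB1 : ∀ y, |Ψ y| ≤ B) (hB2 : ∀ y, |ψ y| ≤ B')
    {b : ℝ} {w : (Fin 4 → ℝ) → ℝ} (hw : Dec b w) :
    ∫ z, Ψ (Fq A z) * DD A 0 w z = - ∫ z, ψ (Fq A z) * w z :=
  ibp_lim H (Ψ := fun _ => Ψ) (ψ := fun _ => ψ) (B := max B B') (fun _ => hΨ) (fun _ => hψ)
    (fun _ y => (hB1 y).trans (le_max_left _ _)) (fun _ y => (hB2 y).trans (le_max_right _ _))
    (fun _ => tendsto_const_nhds) (fun _ => tendsto_const_nhds) hw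

def psiN (ε : ℝ) (n : ℕ) (y : ℝ) : ℝ := max 0 (min 1 (1 + ((n:ℝ) + 1) * (ε - |y|)))

def chi (ε : ℝ) (y : ℝ) : ℝ := if |y| ≤ ε then 1 else 0

lemma psiN_cont (ε : ℝ) (n : ℕ) : Continuous (psiN ε n) := by
  unfold psiN; fun_prop

lemma psiN_nonneg (ε : ℝ) (n : ℕ) (y : ℝ) : 0 ≤ psiN ε n y := le_max_left _ _

lemma psiN_le_one (ε : ℝ) (n : ℕ) (y : ℝ) : psiN ε n y ≤ 1 :=
  max_le zero_le_one (min_le_left _ _)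

lemma psiN_le (ε : ℝ) (n : ℕ) (y : ℝ) :
    psiN ε n y ≤ (Icc (-(ε + 1)) (ε + 1)).indicator (fun _ => (1:ℝ)) y := by
  by_cases h : y ∈ Icc (-(ε + 1)) (ε + 1)
  · rw [indicator_of_mem h]; exact psiN_le_one _ _ _
  · rw [indicator_of_notMem h]
    unfold psiN
    refine max_le le_rfl ((min_le_right _ _).trans ?_)
    have h2 : ε + 1 < |y| := by
      by_contra hc
      push Not at hc
      exact h (abs_le.1 hc)
    have hn : (0:ℝ) ≤ n := Nat.cast_nonneg n
    nlinarith

lemma psiN_tendsto (ε : ℝ) (y : ℝ) : Tendsto (fun n => psiN ε n y) atTop (𝓝 (chi ε y)) := by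
  unfold chi
  by_cases h : |y| ≤ ε
  · rw [if_pos h]
    refine tendsto_const_nhds.congr fun n => ?_
    unfold psiN
    have hn : (0:ℝ) ≤ n := Nat.cast_nonneg n
    rw [min_eq_left (by nlinarith), max_eq_right (by norm_num)]
  · rw [if_neg h]
    push Not at h
    refine tendsto_const_nhds.congr' ?_
    obtain ⟨m, hm⟩ := exists_nat_gt (1 / (|y| - ε))
    filter_upwards [eventually_ge_atTop m] with n hn
    have hp : 0 < |y| - ε := by linarith
    rw [div_lt_iff₀ hp] at hm
    have hn' : (m:ℝ) ≤ n := by exact_mod_cast hn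
    unfold psiN
    rw [max_eq_left]
    refine (min_le_right _ _).trans ?_
    nlinarith

def PsiN (ε : ℝ) (n : ℕ) (y : ℝ) : ℝ := ∫ t in (0:ℝ)..y, psiN ε n t
def Chi (ε : ℝ) (y : ℝ) : ℝ := ∫ t in (0:ℝ)..y, chi ε t

lemma PsiN_deriv (ε : ℝ) (n : ℕ) (y : ℝ) : HasDerivAt (PsiN ε n) (psiN ε n y) y :=
  intervalIntegral.integral_hasDerivAt_right ((psiN_cont ε n).intervalIntegrable _ _)
    ((psiN_cont ε n).stronglyMeasurableAtFilter _ _) (psiN_cont ε n).continuousAt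

lemma PsiN_bdd (ε : ℝ) : ∃ B, ∀ n y, |PsiN ε n y| ≤ B := by
  have hI : Integrable ((Icc (-(ε + 1)) (ε + 1)).indicator (fun _ => (1:ℝ))) :=
    (integrable_indicator_iff measurableSet_Icc).2 (by simp)
  refine ⟨∫ y, (Icc (-(ε + 1)) (ε + 1)).indicator (fun _ => (1:ℝ)) y, fun n y => ?_⟩
  have hI2 : Integrable (psiN ε n) := hI.mono' (psiN_cont ε n).aestronglyMeasurable
    (Eventually.of_forall fun t => by
      rw [Real.norm_of_nonneg (psiN_nonneg _ _ _)]; exact psiN_le _ _ _)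
  unfold PsiN
  rw [← Real.norm_eq_abs]
  refine (intervalIntegral.norm_integral_le_integral_norm_uIoc).trans ?_
  have : ∀ t, ‖psiN ε n t‖ = psiN ε n t := fun t => Real.norm_of_nonneg (psiN_nonneg _ _ _)
  simp only [this]
  refine (setIntegral_le_integral hI2 (Eventually.of_forall fun t => psiN_nonneg _ _ _)).trans ?_
  exact integral_mono hI2 hI fun t => psiN_le _ _ _

lemma PsiN_tendsto (ε : ℝ) (y : ℝ) : Tendsto (fun n => PsiN ε n y) atTop (𝓝 (Chi ε y)) := by
  unfold PsiN Chi
  refine intervalIntegral.tendsto_integral_filter_of_dominated_convergence (fun _ => (1:ℝ)) ?_ ?_ ?_ ?_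
  · exact Eventually.of_forall fun n => (psiN_cont ε n).aestronglyMeasurable
  · refine Eventually.of_forall fun n => Eventually.of_forall fun t _ => ?_
    rw [Real.norm_of_nonneg (psiN_nonneg _ _ _)]; exact psiN_le_one _ _ _
  · exact intervalIntegrable_const
  · exact Eventually.of_forall fun t _ => psiN_tendsto ε t

lemma Chi_pos {ε : ℝ} (hε : 0 < ε) {y : ℝ} (hy : 0 ≤ y) : Chi ε y = min y ε := by
  unfold Chi
  rw [intervalIntegral.integral_of_le hy]
  have e : ∀ t, chi ε t = (Icc (-ε) ε).indicator (fun _ => (1:ℝ)) t := by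
    intro t
    simp only [chi, indicator, mem_Icc, abs_le]
  simp only [e]
  rw [setIntegral_indicator measurableSet_Icc]
  have : Ioc 0 y ∩ Icc (-ε) ε = Ioc 0 (min y ε) := by
    ext t
    simp only [mem_inter_iff, mem_Ioc, mem_Icc, le_min_iff]
    constructor
    · rintro ⟨⟨h1, h2⟩, h3, h4⟩; exact ⟨h1, h2, h4⟩
    · rintro ⟨h1, h2, h4⟩; exact ⟨⟨h1, h2⟩, by linarith, h4⟩
  rw [this]
  simp [hy, hε.le]

lemma Chi_neg (ε y : ℝ) : Chi ε (-y) = - Chi ε y := by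
  unfold Chi
  have := intervalIntegral.integral_comp_neg (f := chi ε) (a := 0) (b := y)
  have e : ∀ t, chi ε (-t) = chi ε t := fun t => by simp [chi]
  simp only [e, neg_zero] at this
  rw [this, intervalIntegral.integral_symm]

lemma Chi_abs {ε : ℝ} (hε : 0 < ε) (y : ℝ) : |Chi ε y| ≤ ε := by
  rcases le_total 0 y with h | h
  · rw [Chi_pos hε h, abs_of_nonneg (le_min h hε.le)]; exact min_le_right _ _
  · have h2 : 0 ≤ -y := by linarith
    have := Chi_neg ε (-y)
    rw [neg_neg] at this
    rw [this, abs_neg, Chi_pos hε h2, abs_of_nonneg (le_min h2 hε.le)]; exact min_le_right _ _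

lemma Chi_sign {ε : ℝ} (hε : 0 < ε) {y : ℝ} (hy : y = 0 ∨ ε ≤ |y|) : Chi ε y = ε * Real.sign y := by
  rcases lt_trichotomy 0 y with h | h | h
  · rw [Chi_pos hε h.le, Real.sign_of_pos h, mul_one]
    rcases hy with rfl | hy
    · exact absurd h (lt_irrefl _)
    · rw [abs_of_pos h] at hy; exact min_eq_right hy
  · subst h; simp [Chi]
  · have h2 : 0 ≤ -y := by linarith
    have := Chi_neg ε (-y)
    rw [neg_neg] at this
    rw [this, Chi_pos hε h2, Real.sign_of_neg h]
    rcases hy with rfl | hy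
    · exact absurd h (lt_irrefl _)
    · rw [abs_of_neg h] at hy; rw [min_eq_right hy]; ring

lemma Chi_cont (ε : ℝ) : Measurable (Chi ε) := by
  refine measurable_of_tendsto_metrizable (f := fun n => PsiN ε n) ?_ (tendsto_pi_nhds.2 (PsiN_tendsto ε))
  intro n
  exact (continuous_iff_continuousAt.2 fun y => (PsiN_deriv ε n y).continuousAt).measurable

lemma sign_meas : Measurable Real.sign := by
  unfold Real.sign
  exact Measurable.ite measurableSet_Iio measurable_const
    (Measurable.ite measurableSet_Ioi measurable_const measurable_const)

lemma sign_abs (y : ℝ) : |Real.sign y| ≤ 1 := by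
  rcases Real.sign_apply_eq y with h | h | h <;> simp [h]

lemma sigma_eq {A : Matrix (Fin 4) (Fin 4) ℤ} {a c : ℝ} (H : AC A a c)
    {b : ℝ} {w : (Fin 4 → ℝ) → ℝ} (hw : Dec b w) {s : ℝ} (hs : IsSigmaInf A 0 w s) :
    s = - ∫ z, (Real.sign (Fq A z) / 2) * DD A 0 w z := by
  have hε : ∀ n : ℕ, (0:ℝ) < 1 / ((n:ℝ) + 1) := fun n => by positivity
  have hεl : Tendsto (fun n : ℕ => 1 / ((n:ℝ) + 1)) atTop (𝓝 0) := tendsto_one_div_add_atTop_nhds_zero_nat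
  have hF := Fq_cont A
  have h1 : ∀ ε : ℝ, 0 < ε → (1 / (2 * ε)) * ∫ z in {z : Fin 4 → ℝ | |Fq A z - 0| ≤ ε}, w z =
      - ∫ z, (1 / (2 * ε)) * Chi ε (Fq A z) * DD A 0 w z := by
    intro ε hε
    obtain ⟨B, hB⟩ := PsiN_bdd ε
    have := ibp_lim H (Ψ := PsiN ε) (ψ := psiN ε) (B := max B 1) (PsiN_deriv ε) (psiN_cont ε)
      (fun n y => (hB n y).trans (le_max_left _ _))
      (fun n y => by
        rw [abs_of_nonneg (psiN_nonneg _ _ _)]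
        exact (psiN_le_one _ _ _).trans (le_max_right _ _))
      (PsiN_tendsto ε) (psiN_tendsto ε) hw
    simp only [mul_assoc]
    rw [integral_const_mul, this]
    have hm : MeasurableSet {z : Fin 4 → ℝ | |Fq A z - 0| ≤ ε} :=
      (isClosed_le (by fun_prop) continuous_const).measurableSet
    rw [← integral_indicator hm, mul_neg, neg_neg]
    congr 2
    ext z
    by_cases h : |Fq A z| ≤ ε
    · rw [indicator_of_mem (by simpa using h)]; simp [chi, h]
    · rw [indicator_of_notMem (by simpa using h)]; simp [chi, h]
  have L1 : Tendsto (fun n : ℕ => - ∫ z, (1 / (2 * (1 / ((n:ℝ) + 1)))) * Chi (1 / ((n:ℝ) + 1)) (Fq A z) * DD A 0 w z)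
      atTop (𝓝 s) := by
    refine (hs.comp (tendsto_nhdsWithin_iff.2 ⟨hεl, Eventually.of_forall hε⟩)).congr fun n => ?_
    exact h1 _ (hε n)
  refine tendsto_nhds_unique L1 (Tendsto.neg ?_)
  refine tendsto_integral_of_dominated_convergence (fun z => 1 * (36 * a / c * b * EE z)) ?_ ?_ ?_ ?_
  · intro n
    exact ((((Chi_cont _).comp hF.measurable).const_mul _).mul (DD_meas A 0 hw.cd)).aestronglyMeasurable
  · exact (EE_int.const_mul _).const_mul _
  · intro n
    filter_upwards [ae_ne_zero] with z hz
    rw [Real.norm_eq_abs, abs_mul]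
    gcongr
    · have h := hε n
      rw [abs_mul, abs_of_pos (by positivity)]
      have h2 := Chi_abs h (Fq A z)
      calc _ ≤ 1 / (2 * (1 / ((n:ℝ) + 1))) * (1 / ((n:ℝ) + 1)) := by gcongr
        _ = 1 / 2 := by field_simp
        _ ≤ _ := by norm_num
    · exact DD_bd H le_rfl hw z hz
  · refine Eventually.of_forall fun z => Tendsto.mul ?_ tendsto_const_nhds
    refine tendsto_const_nhds.congr' ?_
    have : ∀ᶠ n : ℕ in atTop, Fq A z = 0 ∨ 1 / ((n:ℝ) + 1) ≤ |Fq A z| := by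
      by_cases h0 : Fq A z = 0
      · exact Eventually.of_forall fun _ => Or.inl h0
      · exact (hεl.eventually (ge_mem_nhds (abs_pos.2 h0))).mono fun n hn => Or.inr hn
    filter_upwards [this] with n hn
    rw [Chi_sign (hε n) hn]
    field_simp

def LL (x : ℝ) (z : Fin 4 → ℝ) : ℝ := EE z / (‖z‖ ^ 2 + x)

lemma EE_meas : Measurable EE := by unfold EE; fun_prop

lemma LL_meas (x : ℝ) : Measurable (LL x) := by
  unfold LL
  have := EE_meas
  fun_prop

lemma LL_nonneg {x : ℝ} (hx : 0 < x) (z : Fin 4 → ℝ) : 0 ≤ LL x z := by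
  have := EE_nonneg z; unfold LL; positivity

lemma LL_int {x : ℝ} (hx : 0 < x) : Integrable (LL x) := by
  refine (EE_int.const_mul (1 / x)).mono' (LL_meas x).aestronglyMeasurable
    (Eventually.of_forall fun z => ?_)
  rw [Real.norm_of_nonneg (LL_nonneg hx z)]
  have := EE_nonneg z
  unfold LL
  rw [div_mul_eq_mul_div, one_mul]
  gcongr
  have := sq_nonneg ‖z‖
  linarith

lemma log_int {x : ℝ} (hx : 0 < x) :
    ∫ y in (0:ℝ)..1, y / (y ^ 2 + x) = (Real.log (1 + x) - Real.log x) / 2 := by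
  have hd : ∀ y ∈ uIcc (0:ℝ) 1, HasDerivAt (fun y : ℝ => Real.log (y ^ 2 + x) / 2) (y / (y ^ 2 + x)) y := by
    intro y _
    have hne : y ^ 2 + x ≠ 0 := by positivity
    have := ((((hasDerivAt_id y).pow 2).add_const x).log hne).div_const 2
    refine HasDerivAt.congr_deriv this ?_
    simp
    field_simp
  rw [intervalIntegral.integral_eq_sub_of_hasDerivAt hd]
  · simp; ring
  · refine ContinuousOn.intervalIntegrable (Continuous.continuousOn ?_)
    exact continuous_id.div (by fun_prop) fun y => by positivity

lemma Lam_est {Cb : ℝ} (hCb : 0 < Cb) : ∃ C : ℝ, 0 ≤ C ∧ ∀ x, 0 < x → x ≤ Cb →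
    ∫ z, LL x z ≤ C * (1 + |Real.log x|) := by
  set v := (volume : Measure (Fin 4 → ℝ)).real (Metric.ball 0 1) with hv
  have hv0 : 0 ≤ v := measureReal_nonneg
  set J := ∫ y : ℝ in Ioi 0, ((1 + ‖y‖) ^ 2)⁻¹ with hJ
  have hJ0 : 0 ≤ J := setIntegral_nonneg measurableSet_Ioi fun y _ => by positivity
  refine ⟨4 * v * (Cb + 1 + J), by positivity, fun x hx hxC => ?_⟩
  have h := integral_fun_norm_addHaar (E := Fin 4 → ℝ) volume
    (fun r : ℝ => ((1 + r) ^ 4 * r ^ 2)⁻¹ / (r ^ 2 + x))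
  have hf : Module.finrank ℝ (Fin 4 → ℝ) = 4 := by simp
  have e : ∫ z, LL x z = ∫ z : Fin 4 → ℝ, (fun r : ℝ => ((1 + r) ^ 4 * r ^ 2)⁻¹ / (r ^ 2 + x)) ‖z‖ := rfl
  rw [e, h, hf, ← hv]
  have hg1 : IntegrableOn (fun y : ℝ => y / (y ^ 2 + x)) (Ioc 0 1) := by
    refine (Continuous.integrableOn_Icc ?_).mono_set Ioc_subset_Icc_self
    exact continuous_id.div (by fun_prop) fun y => by positivity
  have hg1' : IntegrableOn ((Ioc (0:ℝ) 1).indicator fun y : ℝ => y / (y ^ 2 + x)) (Ioi 0) :=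
    ((integrable_indicator_iff measurableSet_Ioc).2 hg1).integrableOn
  have key : ∫ y : ℝ in Ioi 0, y ^ (4 - 1) • (((1 + y) ^ 4 * y ^ 2)⁻¹ / (y ^ 2 + x)) ≤
      (Cb + 1 + J) * (1 + |Real.log x|) := by
    calc _ ≤ ∫ y : ℝ in Ioi 0, ((Ioc (0:ℝ) 1).indicator (fun y : ℝ => y / (y ^ 2 + x)) y + ((1 + ‖y‖) ^ 2)⁻¹) := by
          refine integral_mono_of_nonneg ?_ (hg1'.add one_add_int2.integrableOn) ?_
          · refine (ae_restrict_mem measurableSet_Ioi).mono fun y hy => ?_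
            have hy : (0:ℝ) < y := hy
            simp only [smul_eq_mul, Pi.zero_apply]
            positivity
          · refine (ae_restrict_mem measurableSet_Ioi).mono fun y hy => ?_
            have hy : (0:ℝ) < y := hy
            have e3 : y ^ (4 - 1) • (((1 + y) ^ 4 * y ^ 2)⁻¹ / (y ^ 2 + x)) =
                y / (y ^ 2 + x) / (1 + y) ^ 4 := by
              simp only [smul_eq_mul]; field_simp
            simp only [e3]
            rw [Real.norm_of_nonneg hy.le]
            by_cases h1 : y ≤ 1
            · have hmem : y ∈ Ioc (0:ℝ) 1 := ⟨hy, h1⟩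
              rw [indicator_of_mem hmem]
              have : y / (y ^ 2 + x) / (1 + y) ^ 4 ≤ y / (y ^ 2 + x) :=
                div_le_self (by positivity) (one_le_pow₀ (by linarith))
              have : 0 ≤ ((1 + y) ^ 2)⁻¹ := by positivity
              linarith
            · rw [indicator_of_notMem (fun h => h1 h.2), zero_add]
              push Not at h1
              have h2 : y / (y ^ 2 + x) ≤ 1 := by
                rw [div_le_one (by positivity)]; nlinarith
              calc _ ≤ 1 / (1 + y) ^ 4 := by gcongr
                _ ≤ 1 / (1 + y) ^ 2 := by
                  gcongr
                  · linarith
                  · norm_num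
                _ = _ := one_div _
      _ = (∫ y : ℝ in Ioi 0, (Ioc (0:ℝ) 1).indicator (fun y : ℝ => y / (y ^ 2 + x)) y) + J :=
          integral_add hg1' one_add_int2.integrableOn
      _ = (Real.log (1 + x) - Real.log x) / 2 + J := by
          have hsub : Ioc (0:ℝ) 1 ⊆ Ioi 0 := fun y hy => hy.1
          rw [setIntegral_indicator measurableSet_Ioc, inter_eq_right.2 hsub,
            ← intervalIntegral.integral_of_le zero_le_one, log_int hx]
      _ ≤ _ := by
          have h1 : Real.log (1 + x) ≤ x := by
            have := Real.log_le_sub_one_of_pos (by linarith : 0 < 1 + x); linarith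
          have h2 := neg_abs_le (Real.log x)
          have h3 := abs_nonneg (Real.log x)
          nlinarith [mul_nonneg hCb.le h3, mul_nonneg hJ0 h3]
  simp only [smul_eq_mul, nsmul_eq_mul] at key ⊢
  push_cast
  calc _ ≤ 4 * (v * ((Cb + 1 + J) * (1 + |Real.log x|))) := by gcongr
    _ = _ := by ring

def rr (A : Matrix (Fin 4) (Fin 4) ℤ) (x : ℝ) (z : Fin 4 → ℝ) : ℝ :=
  ((GA A z + x) * (1 + GA A z) ^ 2)⁻¹

def RR (x : ℝ) (z : Fin 4 → ℝ) : ℝ := ((‖z‖ ^ 2 + x) * (1 + ‖z‖) ^ 4)⁻¹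

lemma rr_pos (A : Matrix (Fin 4) (Fin 4) ℤ) {x : ℝ} (hx : 0 < x) (z : Fin 4 → ℝ) : 0 < rr A x z := by
  have := GA_nonneg A z
  unfold rr; positivity

lemma rr_le {A : Matrix (Fin 4) (Fin 4) ℤ} {a c : ℝ} (H : AC A a c) :
    ∃ K : ℝ, 0 < K ∧ ∀ x, 0 < x → ∀ z, rr A x z ≤ K * RR x z := by
  have hc0 := H.c0
  set d := min c 1 with hd
  have hd0 : 0 < d := lt_min hc0 one_pos
  have hdc : d ≤ c := min_le_left _ _
  have hd1 : d ≤ 1 := min_le_right _ _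
  refine ⟨(d * (d / 2) ^ 2)⁻¹, by positivity, fun x hx z => ?_⟩
  unfold rr RR
  rw [← mul_inv]
  have hG := GA_nonneg A z
  have hz := norm_nonneg z
  have h0 := H.hc z
  have h1 : d * (‖z‖ ^ 2 + x) ≤ GA A z + x := by nlinarith [sq_nonneg ‖z‖]
  have h2 : d / 2 * (1 + ‖z‖) ^ 2 ≤ 1 + GA A z := by nlinarith [sq_nonneg ‖z‖, sq_nonneg (‖z‖ - 1)]
  refine inv_anti₀ (by positivity) ?_
  calc _ = (d * (‖z‖ ^ 2 + x)) * (d / 2 * (1 + ‖z‖) ^ 2) ^ 2 := by ring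
    _ ≤ _ := by gcongr

lemma RR_le {A : Matrix (Fin 4) (Fin 4) ℤ} {a c : ℝ} (H : AC A a c) :
    ∃ K : ℝ, 0 < K ∧ ∀ x, 0 < x → ∀ z, RR x z ≤ K * rr A x z := by
  set d := 4 * a ^ 2 + 1 with hd
  have hd1 : 1 ≤ d := by have := sq_nonneg a; linarith
  refine ⟨d ^ 3, by positivity, fun x hx z => ?_⟩
  have hG := GA_nonneg A z
  have hz := norm_nonneg z
  have h0 : GA A z ≤ 4 * a ^ 2 * ‖z‖ ^ 2 := by
    unfold GA
    have : ∀ i ∈ Finset.univ, (gL A i z) ^ 2 ≤ a ^ 2 * ‖z‖ ^ 2 := by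
      intro i _
      rw [← mul_pow]
      exact sq_le_sq' (abs_le.1 (H.hg i z)).1 (abs_le.1 (H.hg i z)).2
    refine (Finset.sum_le_sum this).trans ?_
    simp; apply le_of_eq; ring
  have hs := sq_nonneg ‖z‖
  have ha := sq_nonneg a
  have h1 : GA A z + x ≤ d * (‖z‖ ^ 2 + x) := by nlinarith
  have h2 : 1 + GA A z ≤ d * (1 + ‖z‖) ^ 2 := by nlinarith
  unfold rr RR
  rw [← div_eq_mul_inv, inv_eq_one_div, div_le_div_iff₀ (by positivity) (by positivity), one_mul]
  calc _ ≤ (d * (‖z‖ ^ 2 + x)) * (d * (1 + ‖z‖) ^ 2) ^ 2 := by gcongr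
    _ = _ := by ring

lemma GA_fderiv_norm {A : Matrix (Fin 4) (Fin 4) ℤ} {a c : ℝ} (H : AC A a c) (z : Fin 4 → ℝ) :
    ‖∑ i, (2 * gL A i z) • gL A i‖ ≤ 8 * a ^ 2 * ‖z‖ := by
  have ha := H.a0
  have : ∀ i ∈ Finset.univ, ‖(2 * gL A i z) • gL A i‖ ≤ 2 * (a * ‖z‖) * a := by
    intro i _
    rw [norm_smul, norm_mul, Real.norm_eq_abs 2, abs_of_pos (by norm_num : (0:ℝ) < 2)]
    gcongr
    · exact H.hg i z
    · exact ContinuousLinearMap.opNorm_le_bound _ ha.le (H.hg i)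
  refine (norm_sum_le_of_le _ this).trans ?_
  simp; apply le_of_eq; ring

lemma rr_fderiv {A : Matrix (Fin 4) (Fin 4) ℤ} {a c : ℝ} (H : AC A a c) {x : ℝ} (hx : 0 < x)
    (z : Fin 4 → ℝ) :
    ‖fderiv ℝ (rr A x) z‖ ≤ rr A x z * (1 / (GA A z + x) + 2 / (1 + GA A z)) * (8 * a ^ 2 * ‖z‖) := by
  have hG := GA_nonneg A z
  have hne : (GA A z + x) * (1 + GA A z) ^ 2 ≠ 0 := by positivity
  have hd : HasDerivAt (fun s : ℝ => ((s + x) * (1 + s) ^ 2)⁻¹)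
      (-(rr A x z * (1 / (GA A z + x) + 2 / (1 + GA A z)))) (GA A z) := by
    have h1 := (((hasDerivAt_id (GA A z)).add_const x).mul
      (((hasDerivAt_id (GA A z)).const_add 1).pow 2)).inv (by simpa using hne)
    refine HasDerivAt.congr_deriv h1 ?_
    unfold rr
    simp
    field_simp
    ring
  have h2 : HasFDerivAt (rr A x) _ z := hd.comp_hasFDerivAt z (GA_fderiv A z)
  rw [h2.fderiv, norm_smul, norm_neg]
  have := rr_pos A hx z
  rw [Real.norm_of_nonneg (by positivity)]
  gcongr
  exact GA_fderiv_norm H z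

lemma GA_cd (A : Matrix (Fin 4) (Fin 4) ℤ) : ContDiff ℝ 1 (GA A) := by
  unfold GA
  exact ContDiff.sum fun i _ => ((gL A i).contDiff).pow 2

lemma rr_Dec {A : Matrix (Fin 4) (Fin 4) ℤ} {a c : ℝ} (H : AC A a c) {x : ℝ} (hx : 0 < x) :
    ∃ b, Dec b (rr A x) := by
  obtain ⟨K, hK, hr⟩ := rr_le H
  set β := 2 * (1 + 1 / x) with hβ
  have hβ0 : 0 < β := by positivity
  have hR : ∀ z, (1 + ‖z‖) * RR x z ≤ β * Mm z := by
    intro z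
    have hz := norm_nonneg z
    unfold RR Mm
    rw [← div_eq_mul_inv, ← div_eq_mul_inv, div_le_div_iff₀ (by positivity) (by positivity)]
    have : (1 + ‖z‖) ^ 2 ≤ β * (‖z‖ ^ 2 + x) := by
      have : β * (‖z‖ ^ 2 + x) = 2 * ‖z‖ ^ 2 + 2 * x + 2 * (‖z‖ ^ 2 / x) + 2 := by
        rw [hβ]; field_simp; ring
      rw [this]
      have : 0 ≤ ‖z‖ ^ 2 / x := by positivity
      nlinarith [sq_nonneg (‖z‖ - 1)]
    calc _ = (1 + ‖z‖) ^ 2 * (1 + ‖z‖) ^ 4 := by ring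
      _ ≤ β * (‖z‖ ^ 2 + x) * (1 + ‖z‖) ^ 4 := by gcongr
      _ = _ := by ring
  have hRp : ∀ z, 0 ≤ RR x z := fun z => by unfold RR; positivity
  have ha := H.a0
  have hx' : 0 < 1 / x := by positivity
  refine ⟨K * β * (1 + (1 / x + 2) * (8 * a ^ 2)), ?_, by positivity, fun z => ?_, fun z => ?_⟩
  · unfold rr
    refine ContDiff.inv (by have := GA_cd A; fun_prop) fun z => ?_
    have := GA_nonneg A z; positivity
  · rw [abs_of_pos (rr_pos A hx z)]
    have hz := norm_nonneg z
    have hM := (Mm_pos z).le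
    have h1 : rr A x z ≤ K * (β * Mm z) := by
      refine (hr x hx z).trans ?_
      gcongr
      refine le_trans ?_ (hR z)
      nlinarith [hRp z, mul_nonneg hz (hRp z)]
    have h2 : 0 ≤ K * (β * Mm z) * ((1 / x + 2) * (8 * a ^ 2)) := by positivity
    linarith
  · refine (rr_fderiv H hx z).trans ?_
    have hz := norm_nonneg z
    have hM := (Mm_pos z).le
    have hG := GA_nonneg A z
    have h1 : rr A x z * ‖z‖ ≤ K * (β * Mm z) := by
      calc _ ≤ (K * RR x z) * ‖z‖ := by gcongr; exact hr x hx z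
        _ = K * (‖z‖ * RR x z) := by ring
        _ ≤ _ := by
          refine mul_le_mul_of_nonneg_left ?_ hK.le
          refine le_trans ?_ (hR z)
          nlinarith [hRp z, mul_nonneg hz (hRp z)]
    have h3 : 1 / (GA A z + x) + 2 / (1 + GA A z) ≤ 1 / x + 2 := by
      have e1 : 1 / (GA A z + x) ≤ 1 / x := by gcongr; linarith
      have e2 : 2 / (1 + GA A z) ≤ 2 := div_le_self (by norm_num) (by linarith)
      linarith
    calc _ = (rr A x z * ‖z‖) * (1 / (GA A z + x) + 2 / (1 + GA A z)) * (8 * a ^ 2) := by ring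
      _ ≤ K * (β * Mm z) * (1 / x + 2) * (8 * a ^ 2) := by gcongr
      _ ≤ _ := by
        have h2 : 0 ≤ K * (β * Mm z) := by positivity
        linarith

lemma rr_DD {A : Matrix (Fin 4) (Fin 4) ℤ} {a c : ℝ} (H : AC A a c) :
    ∃ K : ℝ, 0 < K ∧ ∀ x, 0 < x → ∀ z, z ≠ 0 → |DD A 0 (rr A x) z| ≤ K * LL x z := by
  obtain ⟨K, hK, hr⟩ := rr_le H
  have ha := H.a0
  have hc := H.c0
  refine ⟨36 * a / c * (24 * a ^ 2 / c + 1) * K, by positivity, fun x hx z hz => ?_⟩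
  have hz0 : 0 < ‖z‖ := norm_pos_iff.2 hz
  have hGc := H.hc z
  have hGp : 0 < GA A z := lt_of_lt_of_le (by positivity) hGc
  have hrp := rr_pos A hx z
  have h1 : ‖fderiv ℝ (rr A x) z‖ ≤ 24 * a ^ 2 / c * rr A x z / ‖z‖ := by
    refine (rr_fderiv H hx z).trans ?_
    have h3 : 1 / (GA A z + x) + 2 / (1 + GA A z) ≤ 3 / (c * ‖z‖ ^ 2) := by
      have e1 : 1 / (GA A z + x) ≤ 1 / (c * ‖z‖ ^ 2) := by gcongr; linarith
      have e2 : 2 / (1 + GA A z) ≤ 2 / (c * ‖z‖ ^ 2) := by gcongr; linarith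
      have e3 : 3 / (c * ‖z‖ ^ 2) = 1 / (c * ‖z‖ ^ 2) + 2 / (c * ‖z‖ ^ 2) := by ring
      linarith
    calc _ ≤ rr A x z * (3 / (c * ‖z‖ ^ 2)) * (8 * a ^ 2 * ‖z‖) := by gcongr
      _ = _ := by field_simp; ring
  refine (DD_abs A H.a0 H.c0 H.ha H.hc H.hg le_rfl (rr A x) z hz).trans ?_
  rw [abs_of_pos hrp]
  calc _ ≤ 36 * a / c * (24 * a ^ 2 / c * rr A x z / ‖z‖ / ‖z‖ + rr A x z / ‖z‖ ^ 2) := by gcongr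
    _ = 36 * a / c * (24 * a ^ 2 / c + 1) * (rr A x z / ‖z‖ ^ 2) := by field_simp
    _ ≤ 36 * a / c * (24 * a ^ 2 / c + 1) * (K * RR x z / ‖z‖ ^ 2) := by
      gcongr; exact hr x hx z
    _ = _ := by
      unfold RR LL EE
      field_simp

lemma S_est {A : Matrix (Fin 4) (Fin 4) ℤ} {a c : ℝ} (H : AC A a c) {Cb : ℝ} (hCb : 0 < Cb) :
    ∃ C : ℝ, 0 ≤ C ∧ ∀ x, 0 < x → x ≤ Cb →
      ∫ z, EE z * (1 / (1 + (Fq A z / x) ^ 2)) ≤ C * (x * (1 + |Real.log x|)) := by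
  obtain ⟨C, hC, hL⟩ := Lam_est hCb
  obtain ⟨K, hK, hD⟩ := rr_DD H
  obtain ⟨K2, hK2, hR⟩ := RR_le H
  refine ⟨(1 + 2 * K2 * K) * C, by positivity, fun x hx hxC => ?_⟩
  obtain ⟨b, hb⟩ := rr_Dec H hx
  have hF := Fq_cont A
  have hψ0 : ∀ y : ℝ, 0 < 1 / (1 + (y / x) ^ 2) := fun y => by positivity
  have hψ1 : ∀ y : ℝ, 1 / (1 + (y / x) ^ 2) ≤ 1 := fun y => by
    rw [div_le_one (by positivity)]; have := sq_nonneg (y / x); linarith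
  have hψc : Continuous fun y : ℝ => 1 / (1 + (y / x) ^ 2) :=
    continuous_const.div (by fun_prop) fun y => by positivity
  have hΨ : ∀ y : ℝ, HasDerivAt (fun y => x * Real.arctan (y / x)) (1 / (1 + (y / x) ^ 2)) y := by
    intro y
    have := (((hasDerivAt_id y).div_const x).arctan).const_mul x
    refine HasDerivAt.congr_deriv this ?_
    simp; field_simp
  have hΨb : ∀ y : ℝ, |x * Real.arctan (y / x)| ≤ 2 * x := by
    intro y
    rw [abs_mul, abs_of_pos hx]
    have h1 := Real.arctan_lt_pi_div_two (y / x)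
    have h2 := Real.neg_pi_div_two_lt_arctan (y / x)
    have h3 := Real.pi_le_four
    have : |Real.arctan (y / x)| ≤ 2 := abs_le.2 ⟨by linarith, by linarith⟩
    nlinarith
  have hibp := ibp_const H hΨ hψc hΨb (fun y => by rw [abs_of_pos (hψ0 y)]; exact hψ1 y) hb
  have hI1 : Integrable fun z => 1 / (1 + (Fq A z / x) ^ 2) * rr A x z := by
    refine int_of_bdd (K := b) ((hψc.comp hF).mul hb.cd.continuous) fun z => ?_
    rw [abs_mul, abs_of_pos (hψ0 _)]
    calc _ ≤ 1 * |rr A x z| := by gcongr; exact hψ1 _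
      _ ≤ _ := by rw [one_mul]; exact hb.h0 z
  have h1 : ∫ z, 1 / (1 + (Fq A z / x) ^ 2) * rr A x z ≤ 2 * x * K * ∫ z, LL x z := by
    have e : ∫ z, 1 / (1 + (Fq A z / x) ^ 2) * rr A x z =
        - ∫ z, x * Real.arctan (Fq A z / x) * DD A 0 (rr A x) z := by rw [hibp, neg_neg]
    rw [e]
    refine (neg_le_abs _).trans ?_
    rw [← Real.norm_eq_abs, ← integral_const_mul]
    refine norm_integral_le_of_norm_le ((LL_int hx).const_mul _) ?_
    filter_upwards [ae_ne_zero] with z hz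
    rw [Real.norm_eq_abs, abs_mul, mul_assoc (2 * x)]
    gcongr
    · exact hΨb _
    · exact hD x hx z hz
  have hI2 := (LL_int hx).const_mul x
  have h2 : ∫ z, EE z * (1 / (1 + (Fq A z / x) ^ 2)) ≤
      ∫ z, (x * LL x z + K2 * (1 / (1 + (Fq A z / x) ^ 2) * rr A x z)) := by
    refine integral_mono_of_nonneg ?_ (hI2.add (hI1.const_mul K2)) ?_
    · exact Eventually.of_forall fun z => mul_nonneg (EE_nonneg z) (hψ0 _).le
    · filter_upwards [ae_ne_zero] with z hz
      have hz0 : 0 < ‖z‖ := norm_pos_iff.2 hz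
      have e : EE z = x * LL x z + RR x z := by
        unfold LL RR EE
        field_simp
        ring
      have hp := hψ0 (Fq A z)
      have hp1 := hψ1 (Fq A z)
      have hl := LL_nonneg hx z
      calc _ = x * LL x z * (1 / (1 + (Fq A z / x) ^ 2)) + (1 / (1 + (Fq A z / x) ^ 2)) * RR x z := by
            rw [e]; ring
        _ ≤ x * LL x z * 1 + (1 / (1 + (Fq A z / x) ^ 2)) * (K2 * rr A x z) := by
            gcongr; exact hR x hx z
        _ = _ := by ring
  rw [integral_add hI2 (hI1.const_mul K2), integral_const_mul, integral_const_mul] at h2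
  have h3 := hL x hx hxC
  calc _ ≤ _ := h2
    _ ≤ x * (∫ z, LL x z) + K2 * (2 * x * K * (∫ z, LL x z)) := by gcongr
    _ = (1 + 2 * K2 * K) * (x * (∫ z, LL x z)) := by ring
    _ ≤ (1 + 2 * K2 * K) * (x * (C * (1 + |Real.log x|))) := by gcongr
    _ = _ := by ring

lemma Dec_of_MemC {w : (Fin 4 → ℝ) → ℝ} (hw : MemC 1 ((4 : ℝ) + 1) w) :
    Dec (32 * wNorm 1 ((4 : ℝ) + 1) w) w := by
  have hn : ∀ k ≤ 1, ∀ z, ‖iteratedFDeriv ℝ k w z‖ * jap z ^ ((4:ℝ) + 1) ≤ wNorm 1 ((4 : ℝ) + 1) w :=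
    fun k hk z => le_csSup hw.2 ⟨k, z, hk, rfl⟩
  set n := wNorm 1 ((4 : ℝ) + 1) w with hndef
  have hj : ∀ z : Fin 4 → ℝ, (1 + ‖z‖) ^ 5 ≤ 32 * jap z ^ ((4:ℝ) + 1) := by
    intro z
    have e : jap z ^ ((4:ℝ) + 1) = jap z ^ 5 := by
      rw [show (4:ℝ) + 1 = ((5:ℕ) : ℝ) by norm_num, Real.rpow_natCast]
    have h : 1 + ‖z‖ ≤ 2 * jap z := by
      unfold jap
      have h1 := le_max_left 1 ‖z‖
      have h2 := le_max_right 1 ‖z‖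
      linarith
    rw [e]
    calc _ ≤ (2 * jap z) ^ 5 := by gcongr
      _ = _ := by ring
  have hb : ∀ (z : Fin 4 → ℝ) (t : ℝ), 0 ≤ t → t * jap z ^ ((4:ℝ) + 1) ≤ n → t ≤ 32 * n * Mm z := by
    intro z t ht h
    unfold Mm
    rw [← div_eq_mul_inv, le_div_iff₀ (by positivity)]
    have := hj z
    nlinarith
  refine ⟨hw.1, ?_, fun z => ?_, fun z => ?_⟩
  · have := hn 0 zero_le_one 0
    have h2 : 0 ≤ ‖iteratedFDeriv ℝ 0 w 0‖ * jap (0 : Fin 4 → ℝ) ^ ((4:ℝ) + 1) := by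
      have : 0 ≤ jap (0 : Fin 4 → ℝ) := by simp [jap]
      positivity
    linarith
  · refine hb z _ (abs_nonneg _) ?_
    have := hn 0 zero_le_one z
    rwa [norm_iteratedFDeriv_zero] at this
  · refine hb z _ (norm_nonneg _) ?_
    have := hn 1 le_rfl z
    rwa [norm_iteratedFDeriv_one] at this

lemma sign_div {x : ℝ} (hx : 0 < x) (y : ℝ) : Real.sign (y / x) = Real.sign y := by
  rcases lt_trichotomy 0 y with h | h | h
  · rw [Real.sign_of_pos h, Real.sign_of_pos (by positivity)]
  · subst h; simp
  · rw [Real.sign_of_neg h, Real.sign_of_neg (div_neg_of_neg_of_pos h hx)]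

lemma main_est {A : Matrix (Fin 4) (Fin 4) ℤ} {a c : ℝ} (H : AC A a c) {Cb : ℝ} (hCb : 0 < Cb) :
    ∃ C : ℝ, 0 ≤ C ∧ ∀ x, 0 < x → x ≤ Cb → ∀ (b : ℝ) (w : (Fin 4 → ℝ) → ℝ), Dec b w →
      ∀ s, IsSigmaInf A 0 w s →
        |(∫ z, w z * hFun x (Fq A z)) - s| ≤ C * b * (x * (1 + |Real.log x|)) := by
  obtain ⟨C1, hC1, hcc⟩ := cc_est
  obtain ⟨Ck, hCk, hK⟩ := K1_est
  obtain ⟨Bk, hBk, hk⟩ := k1_bdd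
  obtain ⟨CS, hCS, hS⟩ := S_est H hCb
  have ha := H.a0
  have hc := H.c0
  have hMi : 0 ≤ ∫ z, Mm z := integral_nonneg fun z => (Mm_pos z).le
  refine ⟨C1 * (∫ z, Mm z) + Ck * (36 * a / c) * CS, by positivity, fun x hx hxC b w hw s hs => ?_⟩
  have hb := hw.b0
  have hF := Fq_cont A
  have hwI : Integrable w := int_of_bdd hw.cd.continuous hw.h0
  have hψc : Continuous fun y : ℝ => x⁻¹ * k1 (y / x) := by
    have := k1_cont; fun_prop
  have hψb : ∀ y : ℝ, |x⁻¹ * k1 (y / x)| ≤ x⁻¹ * Bk := by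
    intro y
    rw [abs_mul, abs_of_pos (inv_pos.2 hx)]
    gcongr; exact hk _
  have hΨ : ∀ y : ℝ, HasDerivAt (fun y => K1 (y / x)) (x⁻¹ * k1 (y / x)) y := by
    intro y
    have := (K1_deriv (y / x)).comp y ((hasDerivAt_id y).div_const x)
    refine HasDerivAt.congr_deriv this ?_
    field_simp
  have hK' : ∀ y : ℝ, |K1 (y / x) - Real.sign y / 2| ≤ Ck * (1 / (1 + (y / x) ^ 2)) := by
    intro y
    have := hK (y / x)
    rw [sign_div hx] at this
    rwa [mul_one_div]
  have hΨb : ∀ y : ℝ, |K1 (y / x)| ≤ Ck + 1 := by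
    intro y
    have h1 := hK' y
    have h2 : 1 / (1 + (y / x) ^ 2) ≤ 1 := by
      rw [div_le_one (by positivity)]; have := sq_nonneg (y / x); linarith
    have h3 : Ck * (1 / (1 + (y / x) ^ 2)) ≤ Ck * 1 := by gcongr
    have h4 := sign_abs y
    rw [abs_le] at *
    constructor <;> linarith
  have hΨm : Measurable fun y : ℝ => K1 (y / x) :=
    (continuous_iff_continuousAt.2 fun y => (hΨ y).continuousAt).measurable
  have hI1 : Integrable fun z => x⁻¹ * k1 (Fq A z / x) * w z := by
    refine int_of_bdd (K := x⁻¹ * Bk * b) ((hψc.comp hF).mul hw.cd.continuous) fun z => ?_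
    rw [abs_mul, mul_assoc (x⁻¹ * Bk)]
    gcongr
    · exact hψb _
    · exact hw.h0 z
  have hsplit : ∫ z, w z * hFun x (Fq A z) = cc x * (∫ z, w z) + ∫ z, x⁻¹ * k1 (Fq A z / x) * w z := by
    rw [← integral_const_mul, ← integral_add (hwI.const_mul _) hI1]
    refine integral_congr_ae (Eventually.of_forall fun z => ?_)
    simp only [hFun_eq hx]; ring
  have hibp := ibp_const H hΨ hψc hΨb hψb hw
  have hsig := sigma_eq H hw hs
  have J1 := DD_int H hw hΨm hΨb
  have J2 : Integrable fun z => Real.sign (Fq A z) / 2 * DD A 0 w z :=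
    DD_int H hw (Ψ := fun y => Real.sign y / 2) (sign_meas.div_const 2) (B := 1) (fun y => by
      have := sign_abs y
      rw [abs_div, abs_of_pos (by norm_num : (0:ℝ) < 2)]; linarith)
  have e : (∫ z, w z * hFun x (Fq A z)) - s = cc x * (∫ z, w z) -
      ∫ z, (K1 (Fq A z / x) - Real.sign (Fq A z) / 2) * DD A 0 w z := by
    have e1 : ∫ z, (K1 (Fq A z / x) - Real.sign (Fq A z) / 2) * DD A 0 w z =
        (∫ z, K1 (Fq A z / x) * DD A 0 w z) - ∫ z, Real.sign (Fq A z) / 2 * DD A 0 w z := by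
      rw [← integral_sub J1 J2]
      refine integral_congr_ae (Eventually.of_forall fun z => ?_)
      simp only; ring
    rw [e1, hsplit, hsig, hibp]; ring
  have b1 : |cc x * (∫ z, w z)| ≤ C1 * x * (b * ∫ z, Mm z) := by
    rw [abs_mul]
    gcongr
    · exact hcc x hx
    · rw [← integral_const_mul, ← Real.norm_eq_abs]
      exact norm_integral_le_of_norm_le (Mm_int.const_mul b) (Eventually.of_forall hw.h0)
  have hEi : Integrable fun z => EE z * (1 / (1 + (Fq A z / x) ^ 2)) := by
    refine EE_int.mono' ?_ (Eventually.of_forall fun z => ?_)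
    · have := EE_meas
      have := hF.measurable
      exact (by fun_prop : Measurable _).aestronglyMeasurable
    · have h0 := EE_nonneg z
      rw [Real.norm_of_nonneg (by positivity)]
      refine mul_le_of_le_one_right h0 ?_
      rw [div_le_one (by positivity)]; have := sq_nonneg (Fq A z / x); linarith
  have b2 : |∫ z, (K1 (Fq A z / x) - Real.sign (Fq A z) / 2) * DD A 0 w z| ≤
      Ck * (36 * a / c * b) * ∫ z, EE z * (1 / (1 + (Fq A z / x) ^ 2)) := by
    rw [← integral_const_mul, ← Real.norm_eq_abs]
    refine norm_integral_le_of_norm_le (hEi.const_mul _) ?_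
    filter_upwards [ae_ne_zero] with z hz
    rw [Real.norm_eq_abs, abs_mul]
    calc _ ≤ Ck * (1 / (1 + (Fq A z / x) ^ 2)) * (36 * a / c * b * EE z) := by
          gcongr
          · exact hK' _
          · exact DD_bd H le_rfl hw z hz
      _ = _ := by ring
  have hlog := abs_nonneg (Real.log x)
  rw [e]
  calc _ ≤ _ := abs_sub _ _
    _ ≤ C1 * x * (b * ∫ z, Mm z) + Ck * (36 * a / c * b) * (CS * (x * (1 + |Real.log x|))) := by
        refine add_le_add b1 (b2.trans ?_)
        refine mul_le_mul_of_nonneg_left (hS x hx hxC) (by positivity)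
    _ ≤ C1 * (x * (1 + |Real.log x|)) * (b * ∫ z, Mm z) + Ck * (36 * a / c * b) * (CS * (x * (1 + |Real.log x|))) := by
        gcongr
        nlinarith
    _ = _ := by ring

lemma beta_log {x β : ℝ} (hx : 0 < x) (hβ : 0 < β) (hβ1 : β ≤ 1) :
    1 + |Real.log x| ≤ 3 * (β ^ 2)⁻¹ * max 1 |Real.log (x / β)| := by
  have h1 : Real.log x = Real.log (x / β) + Real.log β := by
    rw [Real.log_div hx.ne' hβ.ne']; ring
  have h2 : |Real.log β| ≤ (β ^ 2)⁻¹ := by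
    rw [abs_of_nonpos (Real.log_nonpos hβ.le hβ1), ← Real.log_inv]
    have h3 := Real.log_le_sub_one_of_pos (inv_pos.2 hβ)
    have h4 : 1 ≤ β⁻¹ := (one_le_inv₀ hβ).2 hβ1
    rw [← inv_pow]
    nlinarith
  have h3 : 1 ≤ (β ^ 2)⁻¹ := (one_le_inv₀ (by positivity)).2 (pow_le_one₀ hβ.le hβ1)
  have h4 := le_max_left 1 |Real.log (x / β)|
  have h5 := le_max_right 1 |Real.log (x / β)|
  have h6 : |Real.log x| ≤ |Real.log (x / β)| + |Real.log β| := by rw [h1]; exact abs_add_le _ _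
  set m := max 1 |Real.log (x / β)|
  nlinarith

/-- (Proposition on `I_q(0)`, part b), `d = 4`, `m = 0`):
`I_q(0;A,0,L) = L⁴ σ_∞(w;A,0) + O(β^{−M−1} q^M L^{4−M} ⟨log(q/(Lβ))⟩ ‖w‖_{M,5})`
`+ O_{C,N}((q^N L^{4−N} + β^N)(‖w‖_{M−1,5} + L q⁻¹ ‖w‖_{0,5}))`. -/
theorem stmt_11 (A : Matrix (Fin 4) (Fin 4) ℤ) (hA : A.IsSymm) (hdet : A.det ≠ 0)
    (heven : ∀ i, 2 ∣ A i i)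
    (M : ℕ) (hM1 : 1 ≤ M) (hM2 : M ≤ 1) (Cb : ℝ) (hCb : 0 < Cb) :
    ∃ C₁ : ℝ, ∀ N : ℝ, 0 ≤ N → ∃ C₂ : ℝ,
      ∀ L : ℝ, 1 ≤ L → ∀ q : ℝ, 0 < q → q ≤ Cb * L → ∀ β : ℝ, 0 < β → β ≤ 1 →
        ∀ w : (Fin 4 → ℝ) → ℝ, MemC M ((4 : ℝ) + 1) w →
          ∀ sigInf : ℝ, IsSigmaInf A 0 w sigInf →
            |L ^ (4 : ℝ) * (∫ z : Fin 4 → ℝ, w z * hFun (q / L) (Fq A z)) -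
                L ^ (4 : ℝ) * sigInf| ≤
              C₁ * (β ^ (M + 1))⁻¹ * q ^ M * L ^ ((4 : ℝ) - M) *
                  max 1 |Real.log (q / (L * β))| * wNorm M ((4 : ℝ) + 1) w
              + C₂ * (q ^ N * L ^ ((4 : ℝ) - N) + β ^ N) *
                  (wNorm (M - 1) ((4 : ℝ) + 1) w + L * q⁻¹ * wNorm 0 ((4 : ℝ) + 1) w) := by
  obtain rfl : M = 1 := le_antisymm hM2 hM1
  obtain ⟨a, c, ha, hc, h1, h2, h3⟩ := A_consts A hdet
  have H : AC A a c := ⟨hA, ha, hc, h1, h2, h3⟩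
  obtain ⟨C, hC, hmain⟩ := main_est H hCb
  refine ⟨96 * C, fun N _ => ⟨0, fun L hL q hq hqL β hβ hβ1 w hw s hs => ?_⟩⟩
  have hL0 : 0 < L := by linarith
  have hx : 0 < q / L := by positivity
  have hxC : q / L ≤ Cb := by rwa [div_le_iff₀ hL0]
  have hdec := Dec_of_MemC hw
  have hm := hmain (q / L) hx hxC _ w hdec s hs
  have hn : 0 ≤ wNorm 1 ((4 : ℝ) + 1) w := by have := hdec.b0; linarith
  have hbl := beta_log hx hβ hβ1
  rw [div_div] at hbl
  have e4 : L ^ (4:ℝ) * (q / L) = q * L ^ ((4:ℝ) - ((1:ℕ):ℝ)) := by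
    rw [Real.rpow_sub hL0, Nat.cast_one, Real.rpow_one]; ring
  have hL4 : 0 < L ^ (4:ℝ) := Real.rpow_pos_of_pos hL0 _
  rw [← mul_sub, abs_mul, abs_of_pos hL4, zero_mul, zero_mul, add_zero]
  calc _ ≤ L ^ (4:ℝ) * (C * (32 * wNorm 1 ((4 : ℝ) + 1) w) * (q / L * (1 + |Real.log (q / L)|))) := by
        gcongr
    _ ≤ L ^ (4:ℝ) * (C * (32 * wNorm 1 ((4 : ℝ) + 1) w) *
          (q / L * (3 * (β ^ 2)⁻¹ * max 1 |Real.log (q / (L * β))|))) := by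
        gcongr
    _ = (L ^ (4:ℝ) * (q / L)) * (96 * C * wNorm 1 ((4 : ℝ) + 1) w *
          ((β ^ 2)⁻¹ * max 1 |Real.log (q / (L * β))|)) := by ring
    _ = _ := by rw [e4]; ring

end
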